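/- arXiv:1111.4152 — 2 statements merged into one kernel-verified Lean document; each statement's English description precedes it below -/
import Mathlib

section
/- Let K be an algebraically closed field of characteristic 0 or at least 11, and let f ∈ K[X,Z] be a squarefree binary octic with Shioda invariants J₂,…,J₁₀. Then the conditions 96·J₄(f) = J₂(f)², 2304·J₆(f) = −J₂(f)³, 17920·J₈(f) = J₂(f)⁴, 430080·J₁₀(f) = −J₂(f)⁵ and J₃(f) = J₅(f) = J₇(f) = J₉(f) = 0 hold if and only if f is GL₂(K)-equivalent to X⁷Z − XZ⁷ (the homogenization of x⁷ − x); equivalently, the genus-3 hyperelliptic curve y² = f(x,1) has automorphism group U₆ (the group of order 24 ⟨S,T : S¹² = T² = 1, TST = S⁵⟩) if and only if these relations hold, and such a curve is K-isomorphic to y² = x⁷ − x. -/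
open MvPolynomial

/-- Iterated partial derivative in the variable `x` (the variable `0`). -/
noncomputable def dX {k : Type*} [CommSemiring k] (n : ℕ) (p : MvPolynomial (Fin 2) k) :
    MvPolynomial (Fin 2) k :=
  (fun q => pderiv (0 : Fin 2) q)^[n] p

/-- Iterated partial derivative in the variable `z` (the variable `1`). -/
noncomputable def dZ {k : Type*} [CommSemiring k] (n : ℕ) (p : MvPolynomial (Fin 2) k) :
    MvPolynomial (Fin 2) k :=
  (fun q => pderiv (1 : Fin 2) q)^[n] p

/-- The `h`-th transvectant of two binary forms of degrees `r₁` and `r₂`. -/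
noncomputable def transvectant {k : Type*} [Field k] (r₁ r₂ h : ℕ)
    (f g : MvPolynomial (Fin 2) k) : MvPolynomial (Fin 2) k :=
  C ((((r₁ - h).factorial * (r₂ - h).factorial : ℕ) : k) /
      (((r₁.factorial * r₂.factorial : ℕ)) : k)) *
    ∑ j ∈ Finset.range (h + 1),
      C ((-1 : k) ^ j * (h.choose j : k)) * (dX (h - j) (dZ j f) * dX j (dZ (h - j) g))

section Shioda

variable {k : Type*} [Field k]

/-- The covariant `𝔤 = (f,f)₄` of a binary octic. -/
noncomputable def covG (f : MvPolynomial (Fin 2) k) := transvectant 8 8 4 f f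

/-- The covariant `𝔨 = (f,f)₆` of a binary octic. -/
noncomputable def covK (f : MvPolynomial (Fin 2) k) := transvectant 8 8 6 f f

/-- The covariant `𝔥 = (𝔨,𝔨)₂` of a binary octic. -/
noncomputable def covH (f : MvPolynomial (Fin 2) k) := transvectant 4 4 2 (covK f) (covK f)

/-- The covariant `𝔪 = (f,𝔨)₄` of a binary octic. -/
noncomputable def covM (f : MvPolynomial (Fin 2) k) := transvectant 8 4 4 f (covK f)

/-- The covariant `𝔫 = (f,𝔥)₄` of a binary octic. -/
noncomputable def covN (f : MvPolynomial (Fin 2) k) := transvectant 8 4 4 f (covH f)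

/-- The covariant `𝔭 = (𝔤,𝔨)₄` of a binary octic. -/
noncomputable def covP (f : MvPolynomial (Fin 2) k) := transvectant 8 4 4 (covG f) (covK f)

/-- The covariant `𝔮 = (𝔤,𝔥)₄` of a binary octic. -/
noncomputable def covQ (f : MvPolynomial (Fin 2) k) := transvectant 8 4 4 (covG f) (covH f)

/-- The Shioda invariant `J₂ = (f,f)₈`. -/
noncomputable def shJ2 (f : MvPolynomial (Fin 2) k) : k :=
  constantCoeff (transvectant 8 8 8 f f)

/-- The Shioda invariant `J₃ = (f,𝔤)₈`. -/
noncomputable def shJ3 (f : MvPolynomial (Fin 2) k) : k :=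
  constantCoeff (transvectant 8 8 8 f (covG f))

/-- The Shioda invariant `J₄ = (𝔨,𝔨)₄`. -/
noncomputable def shJ4 (f : MvPolynomial (Fin 2) k) : k :=
  constantCoeff (transvectant 4 4 4 (covK f) (covK f))

/-- The Shioda invariant `J₅ = (𝔪,𝔨)₄`. -/
noncomputable def shJ5 (f : MvPolynomial (Fin 2) k) : k :=
  constantCoeff (transvectant 4 4 4 (covM f) (covK f))

/-- The Shioda invariant `J₆ = (𝔨,𝔥)₄`. -/
noncomputable def shJ6 (f : MvPolynomial (Fin 2) k) : k :=
  constantCoeff (transvectant 4 4 4 (covK f) (covH f))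

/-- The Shioda invariant `J₇ = (𝔪,𝔥)₄`. -/
noncomputable def shJ7 (f : MvPolynomial (Fin 2) k) : k :=
  constantCoeff (transvectant 4 4 4 (covM f) (covH f))

/-- The Shioda invariant `J₈ = (𝔭,𝔥)₄`. -/
noncomputable def shJ8 (f : MvPolynomial (Fin 2) k) : k :=
  constantCoeff (transvectant 4 4 4 (covP f) (covH f))

/-- The Shioda invariant `J₉ = (𝔫,𝔥)₄`. -/
noncomputable def shJ9 (f : MvPolynomial (Fin 2) k) : k :=
  constantCoeff (transvectant 4 4 4 (covN f) (covH f))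

/-- The Shioda invariant `J₁₀ = (𝔮,𝔥)₄`. -/
noncomputable def shJ10 (f : MvPolynomial (Fin 2) k) : k :=
  constantCoeff (transvectant 4 4 4 (covQ f) (covH f))

end Shioda

namespace U6

section basics
variable {K : Type*} [Field K]

/-- Linear substitution. -/
noncomputable def act (M : Matrix (Fin 2) (Fin 2) K) (p : MvPolynomial (Fin 2) K) :
    MvPolynomial (Fin 2) K :=
  bind₁ (fun j : Fin 2 => C (M j 0) * X 0 + C (M j 1) * X 1) p

lemma act_mul (M : Matrix (Fin 2) (Fin 2) K) (p q : MvPolynomial (Fin 2) K) :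
    act M (p * q) = act M p * act M q := by simp [act]

lemma act_add (M : Matrix (Fin 2) (Fin 2) K) (p q : MvPolynomial (Fin 2) K) :
    act M (p + q) = act M p + act M q := by simp [act]

lemma act_sub (M : Matrix (Fin 2) (Fin 2) K) (p q : MvPolynomial (Fin 2) K) :
    act M (p - q) = act M p - act M q := by simp [act]

lemma act_C (M : Matrix (Fin 2) (Fin 2) K) (u : K) : act M (C u) = C u := by simp [act]

lemma act_X (M : Matrix (Fin 2) (Fin 2) K) (j : Fin 2) :
    act M (X j) = C (M j 0) * X 0 + C (M j 1) * X 1 := by simp [act]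

lemma act_act (M N : Matrix (Fin 2) (Fin 2) K) (p : MvPolynomial (Fin 2) K) :
    act N (act M p) = act (M * N) p := by
  unfold act
  rw [bind₁_bind₁]
  congr 2
  funext j
  simp [Matrix.mul_apply, Fin.sum_univ_two]
  ring

lemma act_one (p : MvPolynomial (Fin 2) K) : act 1 p = p := by
  have : (fun j : Fin 2 => C ((1 : Matrix (Fin 2) (Fin 2) K) j 0) * X 0 +
      C ((1 : Matrix (Fin 2) (Fin 2) K) j 1) * X 1) = (X : Fin 2 → MvPolynomial (Fin 2) K) := by
    funext j
    revert j
    rw [Fin.forall_fin_two]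
    constructor <;> simp
  unfold act
  rw [this]
  simp

lemma act_inv (N : Matrix (Fin 2) (Fin 2) K) (hN : IsUnit N.det) (p : MvPolynomial (Fin 2) K) :
    act N⁻¹ (act N p) = p := by
  rw [act_act, Matrix.mul_nonsing_inv _ hN, act_one]

lemma act_inv' (N : Matrix (Fin 2) (Fin 2) K) (hN : IsUnit N.det) (p : MvPolynomial (Fin 2) K) :
    act N (act N⁻¹ p) = p := by
  rw [act_act, Matrix.nonsing_inv_mul _ hN, act_one]

lemma constantCoeff_act (M : Matrix (Fin 2) (Fin 2) K) (p : MvPolynomial (Fin 2) K) :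
    constantCoeff (act M p) = constantCoeff p := by
  induction p using MvPolynomial.induction_on with
  | C u => simp [act_C]
  | add p q hp hq => simp [act_add, hp, hq]
  | mul_X p j hp => simp [act_mul, act_X]

lemma eval_act (M : Matrix (Fin 2) (Fin 2) K) (p : MvPolynomial (Fin 2) K) (v : Fin 2 → K) :
    eval v (act M p) = eval (fun j => M j 0 * v 0 + M j 1 * v 1) p := by
  induction p using MvPolynomial.induction_on with
  | C u => simp [act_C]
  | add p q hp hq => simp [act_add, hp, hq]
  | mul_X p j hp => simp [act_mul, act_X, hp]

lemma act_homog (M : Matrix (Fin 2) (Fin 2) K) (p : MvPolynomial (Fin 2) K) (n : ℕ)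
    (hp : p.IsHomogeneous n) : (act M p).IsHomogeneous n := by
  have := hp.aeval (fun j : Fin 2 => C (M j 0) * X 0 + C (M j 1) * X 1 : Fin 2 → MvPolynomial (Fin 2) K) (n := 1)
    (fun j => by
      apply IsHomogeneous.add
      · simpa using (isHomogeneous_C (Fin 2) (M j 0)).mul (isHomogeneous_X K (0 : Fin 2))
      · simpa using (isHomogeneous_C (Fin 2) (M j 1)).mul (isHomogeneous_X K (1 : Fin 2)))
  rw [one_mul] at this
  exact this

lemma act_squarefree (N : Matrix (Fin 2) (Fin 2) K) (hN : IsUnit N.det)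
    (p : MvPolynomial (Fin 2) K) (hp : Squarefree p) : Squarefree (act N p) := by
  rintro d ⟨e, he⟩
  have h1 : p = act N⁻¹ d * act N⁻¹ d * act N⁻¹ e := by
    rw [← act_mul, ← act_mul, ← he, act_inv N hN]
  have h2 : IsUnit (act N⁻¹ d) := hp _ ⟨_, h1⟩
  obtain ⟨w, hw⟩ := h2.exists_right_inv
  have h3 : d * act N w = 1 := by
    have := congrArg (act N) hw
    rw [act_mul, act_inv' N hN] at this
    rw [this]; simp [act]
  exact IsUnit.of_mul_eq_one _ h3

lemma pderiv_act0 (M : Matrix (Fin 2) (Fin 2) K) (p : MvPolynomial (Fin 2) K) :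
    pderiv 0 (act M p) = C (M 0 0) * act M (pderiv 0 p) + C (M 1 0) * act M (pderiv 1 p) := by
  induction p using MvPolynomial.induction_on with
  | C u => simp [act_C]; simp [act]
  | add p q hp hq => simp only [act_add, map_add, hp, hq]; ring
  | mul_X p j hp =>
    simp only [act_mul, Derivation.leibniz, hp, smul_eq_mul, act_add]
    fin_cases j <;> simp [act_X, pderiv_X] <;> simp [act] <;> ring

lemma pderiv_act1 (M : Matrix (Fin 2) (Fin 2) K) (p : MvPolynomial (Fin 2) K) :
    pderiv 1 (act M p) = C (M 0 1) * act M (pderiv 0 p) + C (M 1 1) * act M (pderiv 1 p) := by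
  induction p using MvPolynomial.induction_on with
  | C u => simp [act_C]; simp [act]
  | add p q hp hq => simp only [act_add, map_add, hp, hq]; ring
  | mul_X p j hp =>
    simp only [act_mul, Derivation.leibniz, hp, smul_eq_mul, act_add]
    fin_cases j <;> simp [act_X, pderiv_X] <;> simp [act] <;> ring

/-- The unnormalised transvectant. -/
noncomputable def T (h : ℕ) (p q : MvPolynomial (Fin 2) K) : MvPolynomial (Fin 2) K :=
  ∑ j ∈ Finset.range (h + 1),
      C ((-1 : K) ^ j * (h.choose j : K)) * (dX (h - j) (dZ j p) * dX j (dZ (h - j) q))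

lemma pd_comm (p : MvPolynomial (Fin 2) K) :
    pderiv 0 (pderiv 1 p) = pderiv 1 (pderiv 0 p) := by
  induction p using MvPolynomial.induction_on with
  | C u => simp
  | add p q hp hq => simp only [map_add, hp, hq]
  | mul_X p j hp =>
    fin_cases j <;> simp [Derivation.leibniz, pderiv_X, hp] <;> ring

lemma dX_succ (n : ℕ) (p : MvPolynomial (Fin 2) K) : dX (n + 1) p = dX n (pderiv 0 p) := rfl
lemma dZ_succ (n : ℕ) (p : MvPolynomial (Fin 2) K) : dZ (n + 1) p = dZ n (pderiv 1 p) := rfl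
lemma dZ_comm (n : ℕ) (p : MvPolynomial (Fin 2) K) : dZ n (pderiv 0 p) = pderiv 0 (dZ n p) := by
  induction n generalizing p with
  | zero => rfl
  | succ n ih => rw [dZ_succ, ← pd_comm, ih, dZ_succ]

lemma dX_lin (n : ℕ) (u v : K) (p q : MvPolynomial (Fin 2) K) :
    dX n (C u * p + C v * q) = C u * dX n p + C v * dX n q := by
  induction n generalizing p q with
  | zero => rfl
  | succ n ih => simp [dX_succ, Derivation.leibniz, ih]

lemma dZ_lin (n : ℕ) (u v : K) (p q : MvPolynomial (Fin 2) K) :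
    dZ n (C u * p + C v * q) = C u * dZ n p + C v * dZ n q := by
  induction n generalizing p q with
  | zero => rfl
  | succ n ih => simp [dZ_succ, Derivation.leibniz, ih]

lemma T_lin_left (h : ℕ) (u v : K) (p q r : MvPolynomial (Fin 2) K) :
    T h (C u * p + C v * q) r = C u * T h p r + C v * T h q r := by
  simp only [T, dX_lin, dZ_lin, Finset.mul_sum, ← Finset.sum_add_distrib]
  refine Finset.sum_congr rfl fun j _ => ?_
  ring

lemma T_lin_right (h : ℕ) (u v : K) (p q r : MvPolynomial (Fin 2) K) :
    T h r (C u * p + C v * q) = C u * T h r p + C v * T h r q := by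
  simp only [T, dX_lin, dZ_lin, Finset.mul_sum, ← Finset.sum_add_distrib]
  refine Finset.sum_congr rfl fun j _ => ?_
  ring

lemma T_succ (h : ℕ) (p q : MvPolynomial (Fin 2) K) :
    T (h + 1) p q = T h (pderiv 0 p) (pderiv 1 q) - T h (pderiv 1 p) (pderiv 0 q) := by
  set F : ℕ → MvPolynomial (Fin 2) K := fun j =>
    dX (h + 1 - j) (dZ j p) * dX j (dZ (h + 1 - j) q) with hF
  have e1 : T h (pderiv 0 p) (pderiv 1 q) =
      ∑ j ∈ Finset.range (h + 1), C ((-1 : K) ^ j * (h.choose j : K)) * F j := by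
    refine Finset.sum_congr rfl fun j hj => ?_
    have hj' : j ≤ h := by simpa [Nat.lt_succ_iff] using hj
    have : h + 1 - j = (h - j) + 1 := by omega
    simp only [hF, this, dX_succ, dZ_succ, dZ_comm]
  have e2 : T h (pderiv 1 p) (pderiv 0 q) =
      ∑ j ∈ Finset.range (h + 1), C ((-1 : K) ^ j * (h.choose j : K)) * F (j + 1) := by
    refine Finset.sum_congr rfl fun j hj => ?_
    have : h + 1 - (j + 1) = h - j := by omega
    simp only [hF, this, dX_succ, dZ_succ, dZ_comm]
  have e3 : T (h + 1) p q =
      ∑ j ∈ Finset.range (h + 1 + 1), C ((-1 : K) ^ j * ((h + 1).choose j : K)) * F j := rfl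
  have e4 : ∑ j ∈ Finset.range (h + 1), C ((-1 : K) ^ j * (h.choose j : K)) * F j =
      ∑ j ∈ Finset.range (h + 1 + 1), C ((-1 : K) ^ j * (h.choose j : K)) * F j := by
    rw [Finset.sum_range_succ _ (h + 1)]
    simp
  rw [e1, e2, e3, e4, Finset.sum_range_succ' _ (h + 1), Finset.sum_range_succ' _ (h + 1),
    add_sub_right_comm, ← Finset.sum_sub_distrib]
  congr 1
  · refine Finset.sum_congr rfl fun j hj => ?_
    rw [Nat.choose_succ_succ, ← sub_mul, ← C_sub]
    congr 2
    push_cast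
    ring
  · simp

lemma T_act (M : Matrix (Fin 2) (Fin 2) K) (h : ℕ) (p q : MvPolynomial (Fin 2) K) :
    T h (act M p) (act M q) = C (M.det ^ h) * act M (T h p q) := by
  induction h generalizing p q with
  | zero => simp [T, dX, dZ, act_mul]
  | succ h ih =>
    rw [T_succ, T_succ, pderiv_act0, pderiv_act1, pderiv_act0, pderiv_act1]
    simp only [T_lin_left, T_lin_right, ih, act_sub]
    rw [Matrix.det_fin_two]
    simp only [pow_succ, C_mul, C_sub]
    ring

lemma trans_eq (r₁ r₂ h : ℕ) (p q : MvPolynomial (Fin 2) K) :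
    transvectant r₁ r₂ h p q = C ((((r₁ - h).factorial * (r₂ - h).factorial : ℕ) : K) /
      (((r₁.factorial * r₂.factorial : ℕ)) : K)) * T h p q := rfl

lemma trans_act (M : Matrix (Fin 2) (Fin 2) K) (r₁ r₂ h m n : ℕ) (p q : MvPolynomial (Fin 2) K) :
    transvectant r₁ r₂ h (C (M.det ^ m) * act M p) (C (M.det ^ n) * act M q) =
      C (M.det ^ (h + m + n)) * act M (transvectant r₁ r₂ h p q) := by
  have h1 := T_lin_left h (M.det ^ m) 0 (act M p) 0 (C (M.det ^ n) * act M q)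
  have h2 := T_lin_right h (M.det ^ n) 0 (act M q) 0 (act M p)
  simp only [C_0, zero_mul, add_zero] at h1 h2
  rw [trans_eq, trans_eq, h1, h2, T_act, act_mul, act_C, pow_add, pow_add]
  simp only [C_mul]
  ring

lemma trans_act_cc (M : Matrix (Fin 2) (Fin 2) K) (r₁ r₂ h m n : ℕ)
    (p q : MvPolynomial (Fin 2) K) :
    constantCoeff (transvectant r₁ r₂ h (C (M.det ^ m) * act M p) (C (M.det ^ n) * act M q)) =
      M.det ^ (h + m + n) * constantCoeff (transvectant r₁ r₂ h p q) := by
  rw [trans_act, map_mul, constantCoeff_act]; simp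

lemma act_zero' (M : Matrix (Fin 2) (Fin 2) K) (f : MvPolynomial (Fin 2) K) :
    act M f = C (M.det ^ 0) * act M f := by simp

lemma covG_act (M : Matrix (Fin 2) (Fin 2) K) (f : MvPolynomial (Fin 2) K) :
    covG (act M f) = C (M.det ^ 4) * act M (covG f) := by
  unfold covG; rw [act_zero' M f, trans_act]
lemma covK_act (M : Matrix (Fin 2) (Fin 2) K) (f : MvPolynomial (Fin 2) K) :
    covK (act M f) = C (M.det ^ 6) * act M (covK f) := by
  unfold covK; rw [act_zero' M f, trans_act]
lemma covH_act (M : Matrix (Fin 2) (Fin 2) K) (f : MvPolynomial (Fin 2) K) :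
    covH (act M f) = C (M.det ^ 14) * act M (covH f) := by
  unfold covH; rw [covK_act, trans_act]
lemma covM_act (M : Matrix (Fin 2) (Fin 2) K) (f : MvPolynomial (Fin 2) K) :
    covM (act M f) = C (M.det ^ 10) * act M (covM f) := by
  unfold covM; rw [covK_act, act_zero' M f, trans_act]
lemma covN_act (M : Matrix (Fin 2) (Fin 2) K) (f : MvPolynomial (Fin 2) K) :
    covN (act M f) = C (M.det ^ 18) * act M (covN f) := by
  unfold covN; rw [covH_act, act_zero' M f, trans_act]
lemma covP_act (M : Matrix (Fin 2) (Fin 2) K) (f : MvPolynomial (Fin 2) K) :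
    covP (act M f) = C (M.det ^ 14) * act M (covP f) := by
  unfold covP; rw [covK_act, covG_act, trans_act]
lemma covQ_act (M : Matrix (Fin 2) (Fin 2) K) (f : MvPolynomial (Fin 2) K) :
    covQ (act M f) = C (M.det ^ 22) * act M (covQ f) := by
  unfold covQ; rw [covH_act, covG_act, trans_act]

lemma J2_act (M : Matrix (Fin 2) (Fin 2) K) (f : MvPolynomial (Fin 2) K) :
    shJ2 (act M f) = M.det ^ 8 * shJ2 f := by
  unfold shJ2; rw [act_zero' M f, trans_act_cc]
lemma J3_act (M : Matrix (Fin 2) (Fin 2) K) (f : MvPolynomial (Fin 2) K) :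
    shJ3 (act M f) = M.det ^ 12 * shJ3 f := by
  unfold shJ3; rw [covG_act, act_zero' M f, trans_act_cc]
lemma J4_act (M : Matrix (Fin 2) (Fin 2) K) (f : MvPolynomial (Fin 2) K) :
    shJ4 (act M f) = M.det ^ 16 * shJ4 f := by
  unfold shJ4; rw [covK_act, trans_act_cc]
lemma J5_act (M : Matrix (Fin 2) (Fin 2) K) (f : MvPolynomial (Fin 2) K) :
    shJ5 (act M f) = M.det ^ 20 * shJ5 f := by
  unfold shJ5; rw [covK_act, covM_act, trans_act_cc]
lemma J6_act (M : Matrix (Fin 2) (Fin 2) K) (f : MvPolynomial (Fin 2) K) :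
    shJ6 (act M f) = M.det ^ 24 * shJ6 f := by
  unfold shJ6; rw [covK_act, covH_act, trans_act_cc]
lemma J7_act (M : Matrix (Fin 2) (Fin 2) K) (f : MvPolynomial (Fin 2) K) :
    shJ7 (act M f) = M.det ^ 28 * shJ7 f := by
  unfold shJ7; rw [covM_act, covH_act, trans_act_cc]
lemma J8_act (M : Matrix (Fin 2) (Fin 2) K) (f : MvPolynomial (Fin 2) K) :
    shJ8 (act M f) = M.det ^ 32 * shJ8 f := by
  unfold shJ8; rw [covP_act, covH_act, trans_act_cc]
lemma J9_act (M : Matrix (Fin 2) (Fin 2) K) (f : MvPolynomial (Fin 2) K) :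
    shJ9 (act M f) = M.det ^ 36 * shJ9 f := by
  unfold shJ9; rw [covN_act, covH_act, trans_act_cc]
lemma J10_act (M : Matrix (Fin 2) (Fin 2) K) (f : MvPolynomial (Fin 2) K) :
    shJ10 (act M f) = M.det ^ 40 * shJ10 f := by
  unfold shJ10; rw [covQ_act, covH_act, trans_act_cc]

/-- The relations of the statement. -/
def Rel (f : MvPolynomial (Fin 2) K) : Prop :=
  96 * shJ4 f = shJ2 f ^ 2 ∧ 2304 * shJ6 f = -(shJ2 f ^ 3) ∧
      17920 * shJ8 f = shJ2 f ^ 4 ∧ 430080 * shJ10 f = -(shJ2 f ^ 5) ∧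
      shJ3 f = 0 ∧ shJ5 f = 0 ∧ shJ7 f = 0 ∧ shJ9 f = 0

lemma Rel_act (M : Matrix (Fin 2) (Fin 2) K) (f : MvPolynomial (Fin 2) K) (hf : Rel f) :
    Rel (act M f) := by
  obtain ⟨h4, h6, h8, h10, h3, h5, h7, h9⟩ := hf
  unfold Rel
  rw [J2_act, J3_act, J4_act, J5_act, J6_act, J7_act, J8_act, J9_act, J10_act, h3, h5, h7, h9]
  refine ⟨?_, ?_, ?_, ?_, by simp, by simp, by simp, by simp⟩
  · linear_combination M.det ^ 16 * h4
  · linear_combination M.det ^ 24 * h6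
  · linear_combination M.det ^ 32 * h8
  · linear_combination M.det ^ 40 * h10

end basics

section forms
variable {K : Type*} [Field K]

/-- The binary form with normalised coefficients `a`. -/
noncomputable def form (n : ℕ) (a : ℕ → K) : MvPolynomial (Fin 2) K :=
  ∑ i ∈ Finset.range (n + 1), C ((n.choose i : K) * a i) * (X 0 ^ (n - i) * X 1 ^ i)

lemma pderiv0_form (n : ℕ) (a : ℕ → K) :
    pderiv 0 (form (n + 1) a) = C ((n + 1 : ℕ) : K) * form n a := by
  unfold form
  rw [map_sum, Finset.sum_range_succ, Finset.mul_sum]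
  have : pderiv (0 : Fin 2) (C (((n + 1).choose (n + 1) : K) * a (n + 1)) *
      (X 0 ^ (n + 1 - (n + 1)) * X 1 ^ (n + 1)) : MvPolynomial (Fin 2) K) = 0 := by
    simp [Derivation.leibniz, Derivation.leibniz_pow, pderiv_X]
  rw [this, add_zero]
  refine Finset.sum_congr rfl fun i hi => ?_
  have hi' : i ≤ n := by simpa [Nat.lt_succ_iff] using hi
  obtain ⟨m, rfl⟩ := Nat.exists_eq_add_of_le hi'
  have e1 : i + m + 1 - i = m + 1 := by omega
  have e2 : i + m - i = m := by omega
  have e3 : ((i + m + 1).choose i * (m + 1) : K) = (i + m + 1) * (i + m).choose i := by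
    have := Nat.choose_mul_succ_eq (i + m) i
    rw [e1] at this
    have h := congrArg (Nat.cast : ℕ → K) this
    push_cast at h
    rw [← h]; ring
  rw [e1, e2]
  have e4 : ((i + m + 1).choose i : K) * a i * (m + 1) =
     (i + m + 1) * ((i + m).choose i * a i) := by linear_combination a i * e3
  have e5 := congrArg (C : K → MvPolynomial (Fin 2) K) e4
  simp only [C_mul, C_add, C_1, map_natCast] at e5
  simp [Derivation.leibniz, Derivation.leibniz_pow, pderiv_X]
  linear_combination (X 0 ^ m * X 1 ^ i) * e5

lemma pderiv1_form (n : ℕ) (a : ℕ → K) :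
    pderiv 1 (form (n + 1) a) = C ((n + 1 : ℕ) : K) * form n (fun i => a (i + 1)) := by
  unfold form
  rw [map_sum, Finset.sum_range_succ', Finset.mul_sum]
  have : pderiv (1 : Fin 2) (C (((n + 1).choose 0 : K) * a 0) *
      (X 0 ^ (n + 1 - 0) * X 1 ^ 0) : MvPolynomial (Fin 2) K) = 0 := by
    simp [Derivation.leibniz, Derivation.leibniz_pow, pderiv_X]
  rw [this, add_zero]
  refine Finset.sum_congr rfl fun i hi => ?_
  have e1 : n + 1 - (i + 1) = n - i := by omega
  have e3 : ((n + 1).choose (i + 1) * (i + 1) : K) = (n + 1) * n.choose i := by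
    have h := congrArg (Nat.cast : ℕ → K) (Nat.add_one_mul_choose_eq n i)
    push_cast at h
    rw [← h]
  rw [e1]
  have e4 : ((n + 1).choose (i + 1) : K) * a (i + 1) * (i + 1) =
     (n + 1) * (n.choose i * a (i + 1)) := by linear_combination a (i + 1) * e3
  have e5 := congrArg (C : K → MvPolynomial (Fin 2) K) e4
  simp only [C_mul, C_add, C_1, map_natCast] at e5
  simp [Derivation.leibniz, Derivation.leibniz_pow, pderiv_X]
  linear_combination (X 0 ^ (n - i) * X 1 ^ i) * e5

lemma dX_form (m n : ℕ) (a : ℕ → K) (u : K) :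
    dX m (C u * form (n + m) a) = C (u * ((n + m).descFactorial m : K)) * form n a := by
  induction m generalizing u with
  | zero => simp [dX]
  | succ m ih =>
    rw [dX_succ, Derivation.leibniz, pderiv_C, ← Nat.add_assoc, pderiv0_form]
    have : (C u : MvPolynomial (Fin 2) K) • (C ((n + m + 1 : ℕ) : K) * form (n + m) a) + form (n + m + 1) a • (0 : MvPolynomial (Fin 2) K) =
      C (u * ((n + m + 1 : ℕ) : K)) * form (n + m) a := by
      simp [C_mul]; ring
    rw [this, ih, Nat.succ_descFactorial_succ]
    push_cast
    congr 2
    ring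

lemma dZ_form (m n : ℕ) (a : ℕ → K) (u : K) :
    dZ m (C u * form (n + m) a) =
      C (u * ((n + m).descFactorial m : K)) * form n (fun i => a (i + m)) := by
  induction m generalizing u a with
  | zero => simp [dZ]
  | succ m ih =>
    rw [dZ_succ, Derivation.leibniz, pderiv_C, ← Nat.add_assoc, pderiv1_form]
    have : (C u : MvPolynomial (Fin 2) K) • (C ((n + m + 1 : ℕ) : K) * form (n + m) (fun i => a (i + 1))) +
      form (n + m + 1) a • (0 : MvPolynomial (Fin 2) K) =
      C (u * ((n + m + 1 : ℕ) : K)) * form (n + m) (fun i => a (i + 1)) := by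
      simp [C_mul]; ring
    rw [this, ih, Nat.succ_descFactorial_succ]
    push_cast
    congr 2
    ring

lemma dXZ_form (m l n : ℕ) (a : ℕ → K) :
    dX m (dZ l (form (n + m + l) a)) =
      C (((n + m + l).descFactorial (m + l) : ℕ) : K) * form n (fun i => a (i + l)) := by
  have h1 := dZ_form l (n + m) a 1
  rw [C_1, one_mul, one_mul] at h1
  rw [h1, dX_form]
  congr 2
  rw [← Nat.cast_mul]
  congr 1
  have := Nat.descFactorial_mul_descFactorial (k := l) (m := m + l) (n := n + m + l) (by omega)
  rw [← this]
  simp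
  ring

lemma trans_form (r₁ r₂ h : ℕ) (a b : ℕ → K) (h1 : ((r₁ + h).factorial : K) ≠ 0)
    (h2 : ((r₂ + h).factorial : K) ≠ 0) :
    transvectant (r₁ + h) (r₂ + h) h (form (r₁ + h) a) (form (r₂ + h) b) =
    ∑ j ∈ Finset.range (h + 1), C ((-1 : K) ^ j * (h.choose j : K)) *
      (form r₁ (fun i => a (i + j)) * form r₂ (fun i => b (i + (h - j)))) := by
  rw [trans_eq, T, Finset.mul_sum]
  refine Finset.sum_congr rfl fun j hj => ?_
  have hj' : j ≤ h := by simpa [Nat.lt_succ_iff] using hj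
  obtain ⟨m, rfl⟩ := Nat.exists_eq_add_of_le' hj'
  have e : m + j - j = m := by omega
  have ea := dXZ_form m j r₁ a
  have eb := dXZ_form j m r₂ b
  rw [add_assoc] at ea eb
  rw [add_comm j m] at eb
  rw [e, ea, eb]
  have f1 : ((r₁.factorial : ℕ) : K) * ((r₁ + (m + j)).descFactorial (m + j) : K) =
      ((r₁ + (m + j)).factorial : K) := by
    rw [← Nat.cast_mul]
    have := Nat.factorial_mul_descFactorial (n := r₁ + (m + j)) (k := m + j) (by omega)
    rw [Nat.add_sub_cancel] at this
    rw [this]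
  have f2 : ((r₂.factorial : ℕ) : K) * ((r₂ + (m + j)).descFactorial (m + j) : K) =
      ((r₂ + (m + j)).factorial : K) := by
    rw [← Nat.cast_mul]
    have := Nat.factorial_mul_descFactorial (n := r₂ + (m + j)) (k := m + j) (by omega)
    rw [Nat.add_sub_cancel] at this
    rw [this]
  have f3 : (((r₁ + (m + j) - (m + j)).factorial * (r₂ + (m + j) - (m + j)).factorial : ℕ) : K) /
      (((r₁ + (m + j)).factorial * (r₂ + (m + j)).factorial : ℕ) : K) *
      (((r₁ + (m + j)).descFactorial (m + j) : K) * ((r₂ + (m + j)).descFactorial (m + j) : K)) =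
      1 := by
    rw [Nat.add_sub_cancel, Nat.add_sub_cancel]
    push_cast
    rw [← f1] at h1
    rw [← f2] at h2
    rw [← f1, ← f2, div_mul_eq_mul_div, div_eq_one_iff_eq]
    · ring
    · exact mul_ne_zero h1 h2
  have f4 := congrArg (C : K → MvPolynomial (Fin 2) K) f3
  rw [C_mul, C_mul, C_1] at f4
  linear_combination (C ((-1 : K) ^ j * ((m + j).choose j : K)) *
      (form r₁ (fun i => a (i + j)) * form r₂ (fun i => b (i + m)))) * f4

lemma exists_form (n : ℕ) (hn : ∀ i ≤ n, (n.choose i : K) ≠ 0) (f : MvPolynomial (Fin 2) K)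
    (hf : f.IsHomogeneous n) : ∃ a : ℕ → K, f = form n a := by
  refine ⟨fun i => coeff (Finsupp.single 0 (n - i) + Finsupp.single 1 i) f / (n.choose i : K), ?_⟩
  have key : ∀ i ∈ Finset.range (n + 1), C ((n.choose i : K) *
      (coeff (Finsupp.single 0 (n - i) + Finsupp.single 1 i) f / (n.choose i : K))) *
      (X 0 ^ (n - i) * X 1 ^ i) =
      monomial (Finsupp.single (0 : Fin 2) (n - i) + Finsupp.single 1 i)
        (coeff (Finsupp.single 0 (n - i) + Finsupp.single 1 i) f) := by
    intro i hi
    rw [mul_div_cancel₀ _ (hn i (by simpa [Nat.lt_succ_iff] using hi))]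
    rw [monomial_eq]
    congr 1
    rw [Finsupp.prod_fintype _ _ (by simp), Fin.prod_univ_two]
    simp
  unfold form
  rw [Finset.sum_congr rfl key]
  ext d
  rw [coeff_sum]
  simp only [coeff_monomial]
  by_cases hd : d 0 + d 1 = n
  · rw [Finset.sum_eq_single (d 1)]
    · have : Finsupp.single (0 : Fin 2) (n - d 1) + Finsupp.single 1 (d 1) = d := by
        ext j
        fin_cases j <;> simp <;> omega
      rw [this, if_pos rfl]
    · intro i _ hi
      rw [if_neg]
      intro h
      apply hi
      rw [← h]; simp
    · intro h
      exfalso; apply h; simp; omega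
  · rw [Finset.sum_eq_zero, hf.coeff_eq_zero]
    · intro h; apply hd
      rw [← h, Finsupp.degree_eq_sum, Fin.sum_univ_two]
    · intro i hi
      rw [if_neg]
      intro h
      apply hd
      have : i < n + 1 := by simpa using hi
      rw [← h]; simp; omega

lemma coeff_form (n i : ℕ) (hi : i ≤ n) (a : ℕ → K) :
    coeff (Finsupp.single 0 (n - i) + Finsupp.single 1 i) (form n a) = (n.choose i : K) * a i := by
  unfold form
  rw [coeff_sum]
  rw [Finset.sum_eq_single i]
  · have : (X 0 ^ (n - i) * X 1 ^ i : MvPolynomial (Fin 2) K) =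
      monomial (Finsupp.single (0 : Fin 2) (n - i) + Finsupp.single 1 i) 1 := by
      rw [monomial_eq, Finsupp.prod_fintype _ _ (by simp), Fin.prod_univ_two]
      simp
    rw [this, coeff_C_mul, coeff_monomial, if_pos rfl, mul_one]
  · intro j _ hj
    have : (X 0 ^ (n - j) * X 1 ^ j : MvPolynomial (Fin 2) K) =
      monomial (Finsupp.single (0 : Fin 2) (n - j) + Finsupp.single 1 j) 1 := by
      rw [monomial_eq, Finsupp.prod_fintype _ _ (by simp), Fin.prod_univ_two]
      simp
    rw [this, coeff_C_mul, coeff_monomial, if_neg, mul_zero]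
    intro h
    apply hj
    have := DFunLike.congr_fun h 1
    simpa using this
  · intro h; exfalso; apply h; simp; omega

lemma form_inj (n : ℕ) (hn : ∀ i ≤ n, (n.choose i : K) ≠ 0) (a b : ℕ → K)
    (h : form n a = form n b) (i : ℕ) (hi : i ≤ n) : a i = b i := by
  have h1 := coeff_form n i hi a
  rw [h, coeff_form n i hi b] at h1
  exact (mul_left_cancel₀ (hn i hi) h1).symm

end forms

section explicit
variable {K : Type*} [Field K]

/-- A binary form with plain coefficients. -/
noncomputable def rform (n : ℕ) (a : ℕ → K) : MvPolynomial (Fin 2) K :=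
  ∑ i ∈ Finset.range (n + 1), C (a i) * (X 0 ^ (n - i) * X 1 ^ i)

lemma rform_eq_form (n : ℕ) (c a : ℕ → K) (h : ∀ i ≤ n, c i = (n.choose i : K) * a i) :
    rform n c = form n a := by
  refine Finset.sum_congr rfl fun i hi => ?_
  rw [h i (by simpa [Nat.lt_succ_iff] using hi)]

def gamR (a : ℕ → K) : ℕ → K
  | 0 => 2 * a 0 * a 4 - 8 * a 1 * a 3 + 6 * a 2 * a 2
  | 1 => 8 * a 0 * a 5 - 24 * a 1 * a 4 + 16 * a 2 * a 3
  | 2 => 12 * a 0 * a 6 - 16 * a 1 * a 5 - 44 * a 2 * a 4 + 48 * a 3 * a 3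
  | 3 => 8 * a 0 * a 7 + 16 * a 1 * a 6 - 96 * a 2 * a 5 + 72 * a 3 * a 4
  | 4 => 2 * a 0 * a 8 + 24 * a 1 * a 7 - 44 * a 2 * a 6 - 72 * a 3 * a 5 + 90 * a 4 * a 4
  | 5 => 8 * a 1 * a 8 + 16 * a 2 * a 7 - 96 * a 3 * a 6 + 72 * a 4 * a 5
  | 6 => 12 * a 2 * a 8 - 16 * a 3 * a 7 - 44 * a 4 * a 6 + 48 * a 5 * a 5
  | 7 => 8 * a 3 * a 8 - 24 * a 4 * a 7 + 16 * a 5 * a 6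
  | 8 => 2 * a 4 * a 8 - 8 * a 5 * a 7 + 6 * a 6 * a 6
  | _ => 0

def gam (a : ℕ → K) (i : ℕ) : K := gamR a i / (Nat.choose 8 i : K)

def kapR (a : ℕ → K) : ℕ → K
  | 0 => 2 * a 0 * a 6 - 12 * a 1 * a 5 + 30 * a 2 * a 4 - 20 * a 3 ^ 2
  | 1 => 4 * a 0 * a 7 - 20 * a 1 * a 6 + 36 * a 2 * a 5 - 20 * a 3 * a 4
  | 2 => 2 * a 0 * a 8 - 4 * a 1 * a 7 - 16 * a 2 * a 6 + 68 * a 3 * a 5 - 50 * a 4 ^ 2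
  | 3 => 4 * a 1 * a 8 - 20 * a 2 * a 7 + 36 * a 3 * a 6 - 20 * a 4 * a 5
  | 4 => 2 * a 2 * a 8 - 12 * a 3 * a 7 + 30 * a 4 * a 6 - 20 * a 5 ^ 2
  | _ => 0

def kap (a : ℕ → K) (i : ℕ) : K := kapR a i / (Nat.choose 4 i : K)

def hesR (k : ℕ → K) : ℕ → K
  | 0 => 2 * k 0 * k 2 - 2 * k 1 ^ 2
  | 1 => 4 * k 0 * k 3 - 4 * k 1 * k 2
  | 2 => 2 * k 0 * k 4 + 4 * k 1 * k 3 - 6 * k 2 ^ 2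
  | 3 => 4 * k 1 * k 4 - 4 * k 2 * k 3
  | 4 => 2 * k 2 * k 4 - 2 * k 3 ^ 2
  | _ => 0

def hes (k : ℕ → K) (i : ℕ) : K := hesR k i / (Nat.choose 4 i : K)

def con (a v : ℕ → K) (i : ℕ) : K :=
  a i * v 4 - 4 * a (i + 1) * v 3 + 6 * a (i + 2) * v 2 - 4 * a (i + 3) * v 1 + a (i + 4) * v 0

def pair (u v : ℕ → K) : K :=
  u 0 * v 4 - 4 * u 1 * v 3 + 6 * u 2 * v 2 - 4 * u 3 * v 1 + u 4 * v 0

def pair8 (u v : ℕ → K) : K :=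
  u 0 * v 8 - 8 * u 1 * v 7 + 28 * u 2 * v 6 - 56 * u 3 * v 5 + 70 * u 4 * v 4
   - 56 * u 5 * v 3 + 28 * u 6 * v 2 - 8 * u 7 * v 1 + u 8 * v 0

lemma C_num (n : ℕ) [n.AtLeastTwo] :
    (C (ofNat(n) : K) : MvPolynomial (Fin 2) K) = ofNat(n) := map_ofNat C n

lemma form_zero (a : ℕ → K) : form 0 a = C (a 0) := by simp [form]

lemma choose4 (h2 : (2 : K) ≠ 0) (h3 : (3 : K) ≠ 0) : ∀ i ≤ 4, (Nat.choose 4 i : K) ≠ 0 := by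
  have e4 : (4 : K) = 2 * 2 := by norm_num
  have e6 : (6 : K) = 2 * 3 := by norm_num
  intro i hi
  interval_cases i <;> simp [Nat.choose, e4, e6, h2, h3]

lemma choose8 (h2 : (2 : K) ≠ 0) (h5 : (5 : K) ≠ 0) (h7 : (7 : K) ≠ 0) :
    ∀ i ≤ 8, (Nat.choose 8 i : K) ≠ 0 := by
  have e8 : (8 : K) = 2 * 2 * 2 := by norm_num
  have e28 : (28 : K) = 2 * 2 * 7 := by norm_num
  have e56 : (56 : K) = 2 * 2 * 2 * 7 := by norm_num
  have e70 : (70 : K) = 2 * 5 * 7 := by norm_num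
  intro i hi
  interval_cases i <;> simp [Nat.choose, e8, e28, e56, e70, h2, h5, h7]

lemma fac4 (h2 : (2 : K) ≠ 0) (h3 : (3 : K) ≠ 0) : (Nat.factorial 4 : K) ≠ 0 := by
  have : (Nat.factorial 4 : K) = 2 * 2 * 2 * 3 := by norm_num [Nat.factorial]
  rw [this]; simp [h2, h3]

lemma fac8 (h2 : (2 : K) ≠ 0) (h3 : (3 : K) ≠ 0) (h5 : (5 : K) ≠ 0) (h7 : (7 : K) ≠ 0) :
    (Nat.factorial 8 : K) ≠ 0 := by
  have : (Nat.factorial 8 : K) = 2 * 2 * 2 * 2 * 2 * 2 * 2 * 3 * 3 * 5 * 7 := by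
    norm_num [Nat.factorial]
  rw [this]; simp [h2, h3, h5, h7]

lemma covK_form (h2 : (2 : K) ≠ 0) (h3 : (3 : K) ≠ 0) (h5 : (5 : K) ≠ 0) (h7 : (7 : K) ≠ 0)
    (a : ℕ → K) : covK (form 8 a) = form 4 (kap a) := by
  rw [← rform_eq_form 4 (kapR a) (kap a)
    (fun i hi => (mul_div_cancel₀ _ (choose4 h2 h3 i hi)).symm)]
  have := trans_form 2 2 6 a a (fac8 h2 h3 h5 h7) (fac8 h2 h3 h5 h7)
  unfold covK
  rw [this]
  simp only [form, rform, Finset.sum_range_succ, Finset.sum_range_zero, kapR]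
  simp [Nat.choose, C_num]
  ring

lemma covG_form (h2 : (2 : K) ≠ 0) (h3 : (3 : K) ≠ 0) (h5 : (5 : K) ≠ 0) (h7 : (7 : K) ≠ 0)
    (a : ℕ → K) : covG (form 8 a) = form 8 (gam a) := by
  rw [← rform_eq_form 8 (gamR a) (gam a)
    (fun i hi => (mul_div_cancel₀ _ (choose8 h2 h5 h7 i hi)).symm)]
  have := trans_form 4 4 4 a a (fac8 h2 h3 h5 h7) (fac8 h2 h3 h5 h7)
  unfold covG
  rw [this]
  simp only [form, rform, Finset.sum_range_succ, Finset.sum_range_zero, gamR]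
  simp [Nat.choose, C_num]
  ring

lemma hes_form (h2 : (2 : K) ≠ 0) (h3 : (3 : K) ≠ 0)
    (k : ℕ → K) : transvectant 4 4 2 (form 4 k) (form 4 k) = form 4 (hes k) := by
  rw [← rform_eq_form 4 (hesR k) (hes k)
    (fun i hi => (mul_div_cancel₀ _ (choose4 h2 h3 i hi)).symm)]
  have := trans_form 2 2 2 k k (fac4 h2 h3) (fac4 h2 h3)
  rw [this]
  simp only [form, rform, Finset.sum_range_succ, Finset.sum_range_zero, hesR]
  simp [Nat.choose, C_num]
  ring

lemma con_form (h2 : (2 : K) ≠ 0) (h3 : (3 : K) ≠ 0) (h5 : (5 : K) ≠ 0) (h7 : (7 : K) ≠ 0)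
    (a v : ℕ → K) : transvectant 8 4 4 (form 8 a) (form 4 v) = form 4 (con a v) := by
  have := trans_form 4 0 4 a v (fac8 h2 h3 h5 h7) (fac4 h2 h3)
  rw [this]
  simp only [form, Finset.sum_range_succ, Finset.sum_range_zero, con]
  simp [Nat.choose, C_num]
  ring

lemma pair_form (h2 : (2 : K) ≠ 0) (h3 : (3 : K) ≠ 0)
    (u v : ℕ → K) : constantCoeff (transvectant 4 4 4 (form 4 u) (form 4 v)) = pair u v := by
  have := trans_form 0 0 4 u v (fac4 h2 h3) (fac4 h2 h3)
  rw [this]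
  simp only [form_zero, Finset.sum_range_succ, Finset.sum_range_zero, pair]
  simp [Nat.choose]
  ring

lemma pair8_form (h2 : (2 : K) ≠ 0) (h3 : (3 : K) ≠ 0) (h5 : (5 : K) ≠ 0) (h7 : (7 : K) ≠ 0)
    (u v : ℕ → K) : constantCoeff (transvectant 8 8 8 (form 8 u) (form 8 v)) = pair8 u v := by
  have := trans_form 0 0 8 u v (fac8 h2 h3 h5 h7) (fac8 h2 h3 h5 h7)
  rw [this]
  simp only [form_zero, Finset.sum_range_succ, Finset.sum_range_zero, pair8]
  simp [Nat.choose]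
  ring

/-- The relations in terms of coefficients. -/
lemma Rel_form (h2 : (2 : K) ≠ 0) (h3 : (3 : K) ≠ 0) (h5 : (5 : K) ≠ 0) (h7 : (7 : K) ≠ 0)
    (a : ℕ → K) : Rel (form 8 a) ↔
    96 * pair (kap a) (kap a) = pair8 a a ^ 2 ∧
    2304 * pair (kap a) (hes (kap a)) = -(pair8 a a ^ 3) ∧
    17920 * pair (con (gam a) (kap a)) (hes (kap a)) = pair8 a a ^ 4 ∧
    430080 * pair (con (gam a) (hes (kap a))) (hes (kap a)) = -(pair8 a a ^ 5) ∧
    pair8 a (gam a) = 0 ∧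
    pair (con a (kap a)) (kap a) = 0 ∧
    pair (con a (kap a)) (hes (kap a)) = 0 ∧
    pair (con a (hes (kap a))) (hes (kap a)) = 0 := by
  have k1 := covK_form h2 h3 h5 h7 a
  have k2 := covG_form h2 h3 h5 h7 a
  unfold Rel shJ2 shJ3 shJ4 shJ5 shJ6 shJ7 shJ8 shJ9 shJ10 covM covN covP covQ covH
  simp only [k1, k2, hes_form h2 h3, con_form h2 h3 h5 h7, pair_form h2 h3, pair8_form h2 h3 h5 h7]

end explicit

section substitution
variable {K : Type*} [Field K]

/-- Polarisation operator on normalised coefficients. -/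
def D (x y : K) (a : ℕ → K) (i : ℕ) : K := x * a i + y * a (i + 1)

def sub4 (M : Matrix (Fin 2) (Fin 2) K) (k : ℕ → K) : ℕ → K
  | 0 => D (M 0 0) (M 1 0) (D (M 0 0) (M 1 0) (D (M 0 0) (M 1 0) (D (M 0 0) (M 1 0) k))) 0
  | 1 => D (M 0 0) (M 1 0) (D (M 0 0) (M 1 0) (D (M 0 0) (M 1 0) (D (M 0 1) (M 1 1) k))) 0
  | 2 => D (M 0 0) (M 1 0) (D (M 0 0) (M 1 0) (D (M 0 1) (M 1 1) (D (M 0 1) (M 1 1) k))) 0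
  | 3 => D (M 0 0) (M 1 0) (D (M 0 1) (M 1 1) (D (M 0 1) (M 1 1) (D (M 0 1) (M 1 1) k))) 0
  | 4 => D (M 0 1) (M 1 1) (D (M 0 1) (M 1 1) (D (M 0 1) (M 1 1) (D (M 0 1) (M 1 1) k))) 0
  | _ => 0

lemma act_pow (M : Matrix (Fin 2) (Fin 2) K) (p : MvPolynomial (Fin 2) K) (n : ℕ) :
    act M (p ^ n) = act M p ^ n := by simp [act]

lemma act_form4 (M : Matrix (Fin 2) (Fin 2) K) (k : ℕ → K) :
    act M (form 4 k) = form 4 (sub4 M k) := by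
  simp only [form, Finset.sum_range_succ, Finset.sum_range_zero, act_add, act_mul, act_C,
    act_pow, act_X, zero_add, sub4, D]
  generalize M 0 0 = p
  generalize M 0 1 = q
  generalize M 1 0 = r
  generalize M 1 1 = s
  simp [Nat.choose, C_num]
  ring

/-- The shear `x ↦ x`, `z ↦ z + s x`. -/
def shear (s : K) : Matrix (Fin 2) (Fin 2) K := !![1, 0; s, 1]

lemma shear_det (s : K) : (shear s).det = 1 := by simp [shear]

def sh (s : K) : ℕ → (ℕ → K) → (ℕ → K)
  | 0, a => a
  | n + 1, a => D 1 s (sh s n a)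

lemma act_shear8 (s : K) (a : ℕ → K) :
    act (shear s) (form 8 a) = form 8 (fun i => sh s (8 - i) a i) := by
  simp only [form, Finset.sum_range_succ, Finset.sum_range_zero, act_add, act_mul, act_C,
    act_pow, act_X, zero_add, shear]
  simp [Nat.choose, C_num, sh, D]
  ring

lemma eval_form (n : ℕ) (a : ℕ → K) : eval ![0, 1] (form n a) = a n := by
  unfold form
  rw [Finset.sum_range_succ, map_add, map_sum, Finset.sum_eq_zero]
  · simp
  · intro i hi
    have : n - i ≠ 0 := by
      have : i < n := by simpa using hi
      omega
    simp [this]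

lemma exists_root [IsAlgClosed K] (n : ℕ) (hn : 0 < n) (a : ℕ → K) :
    ∃ N : Matrix (Fin 2) (Fin 2) K, IsUnit N.det ∧ eval ![0, 1] (act N (form n a)) = 0 := by
  by_cases h : a n = 0
  · exact ⟨1, by simp, by rw [act_one, eval_form, h]⟩
  · set p : Polynomial K := ∑ i ∈ Finset.range (n + 1),
      Polynomial.C ((n.choose i : K) * a i) * Polynomial.X ^ i with hp
    have hc : p.coeff n = a n := by
      rw [hp, Polynomial.finsetSum_coeff, Finset.sum_range_succ, Finset.sum_eq_zero]
      · simp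
      · intro i hi
        have : n ≠ i := by
          have : i < n := by simpa using hi
          omega
        rw [Polynomial.coeff_C_mul_X_pow, if_neg this]
    have hd : p.degree ≠ 0 := by
      intro h0
      have : p.coeff n = 0 := by
        apply Polynomial.coeff_eq_zero_of_degree_lt
        rw [h0]
        exact_mod_cast hn
      exact h (hc ▸ this)
    obtain ⟨t, ht⟩ := IsAlgClosed.exists_root p hd
    refine ⟨!![0, 1; 1, t], by simp, ?_⟩
    rw [eval_act]
    have : (fun j : Fin 2 => (!![0, 1; 1, t] : Matrix (Fin 2) (Fin 2) K) j 0 * (![0, 1] : Fin 2 → K) 0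
        + (!![0, 1; 1, t] : Matrix (Fin 2) (Fin 2) K) j 1 * (![0, 1] : Fin 2 → K) 1) = ![1, t] := by
      funext j
      revert j
      rw [Fin.forall_fin_two]
      constructor <;> simp
    rw [this]
    rw [Polynomial.IsRoot, hp, Polynomial.eval_finsetSum] at ht
    rw [form, map_sum, ← ht]
    refine Finset.sum_congr rfl fun i _ => ?_
    simp

/-- The model octic. -/
noncomputable def f0 : MvPolynomial (Fin 2) K := X 0 ^ 7 * X 1 - X 0 * X 1 ^ 7

/-- The hypotheses on an octic with normalised coefficients `a`. -/
def Good (a : ℕ → K) : Prop := Rel (form 8 a) ∧ Squarefree (form 8 a)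

/-- The conclusion. -/
def Goal (f : MvPolynomial (Fin 2) K) : Prop :=
  ∃ M : Matrix (Fin 2) (Fin 2) K, IsUnit M.det ∧ f = act M f0

lemma Goal_of_act (N : Matrix (Fin 2) (Fin 2) K) (hN : IsUnit N.det) (f : MvPolynomial (Fin 2) K)
    (h : Goal (act N f)) : Goal f := by
  obtain ⟨M, hM, h⟩ := h
  refine ⟨M * N⁻¹, ?_, ?_⟩
  · rw [Matrix.det_mul]
    exact hM.mul (Matrix.isUnit_nonsing_inv_det _ hN)
  · rw [← act_act, ← h, act_inv N hN]

lemma form_homog (n : ℕ) (a : ℕ → K) : (form n a).IsHomogeneous n := by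
  apply IsHomogeneous.sum
  intro i hi
  have : i < n + 1 := by simpa using hi
  have h1 := (isHomogeneous_C (Fin 2) ((n.choose i : K) * a i)).mul
    ((isHomogeneous_X_pow (R := K) (0 : Fin 2) (n - i)).mul (isHomogeneous_X_pow (1 : Fin 2) i))
  have e : 0 + (n - i + i) = n := by omega
  rwa [e] at h1

lemma step (h2 : (2 : K) ≠ 0) (h3 : (3 : K) ≠ 0) (h5 : (5 : K) ≠ 0) (h7 : (7 : K) ≠ 0)
    (a : ℕ → K) (ha : Good a) (N : Matrix (Fin 2) (Fin 2) K) (hN : IsUnit N.det) :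
    ∃ a' : ℕ → K, form 8 a' = act N (form 8 a) ∧ Good a' ∧
      (Goal (form 8 a') → Goal (form 8 a)) ∧
      ∀ i ≤ 4, kap a' i = N.det ^ 6 * sub4 N (kap a) i := by
  obtain ⟨a', ha'⟩ := exists_form 8 (choose8 h2 h5 h7) _ (act_homog N _ 8 (form_homog 8 a))
  refine ⟨a', ha'.symm, ⟨?_, ?_⟩, ?_, ?_⟩
  · rw [← ha']; exact Rel_act N _ ha.1
  · rw [← ha']; exact act_squarefree N hN _ ha.2
  · rw [← ha']; exact Goal_of_act N hN _
  · have h := covK_act N (form 8 a)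
    rw [ha', covK_form h2 h3 h5 h7, covK_form h2 h3 h5 h7, act_form4] at h
    have e : C (N.det ^ 6) * form 4 (sub4 N (kap a)) =
        form 4 (fun i => N.det ^ 6 * sub4 N (kap a) i) := by
      unfold form
      rw [Finset.mul_sum]
      refine Finset.sum_congr rfl fun i _ => ?_
      simp only [C_mul]; ring
    rw [e] at h
    exact form_inj 4 (choose4 h2 h3) _ _ h

lemma not_sq_X (f g : MvPolynomial (Fin 2) K) (s : K) (hf : Squarefree f)
    (h : f = (X 1 - C s * X 0) * (X 1 - C s * X 0) * g) : False := by
  have h1 : IsUnit (X 1 - C s * X 0 : MvPolynomial (Fin 2) K) := hf _ ⟨g, h⟩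
  have h2 := h1.map (constantCoeff (R := K) (σ := Fin 2))
  simp at h2

lemma not_sq_X0 (f g : MvPolynomial (Fin 2) K) (hf : Squarefree f)
    (h : f = X 0 * X 0 * g) : False := by
  have h1 : IsUnit (X 0 : MvPolynomial (Fin 2) K) := hf _ ⟨g, h⟩
  have h2 := h1.map (constantCoeff (R := K) (σ := Fin 2))
  simp at h2

lemma no_a8a7 (a : ℕ → K) (ha : Squarefree (form 8 a)) (h8 : a 8 = 0) (h7 : a 7 = 0) : False := by
  apply not_sq_X0 (form 8 a) (∑ i ∈ Finset.range 7,
    C ((Nat.choose 8 i : K) * a i) * (X 0 ^ (6 - i) * X 1 ^ i)) ha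
  simp only [form, Finset.sum_range_succ, Finset.sum_range_zero, h8, h7]
  simp [Nat.choose, C_num]
  ring

end substitution

section algebra
variable {K : Type*} [Field K]

lemma kap_eqs (h2 : (2 : K) ≠ 0) (h3 : (3 : K) ≠ 0) (a : ℕ → K) :
    2 * a 0 * a 6 - 12 * a 1 * a 5 + 30 * a 2 * a 4 - 20 * a 3 ^ 2 = kap a 0 ∧
    4 * a 0 * a 7 - 20 * a 1 * a 6 + 36 * a 2 * a 5 - 20 * a 3 * a 4 = 4 * kap a 1 ∧
    2 * a 0 * a 8 - 4 * a 1 * a 7 - 16 * a 2 * a 6 + 68 * a 3 * a 5 - 50 * a 4 ^ 2 = 6 * kap a 2 ∧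
    4 * a 1 * a 8 - 20 * a 2 * a 7 + 36 * a 3 * a 6 - 20 * a 4 * a 5 = 4 * kap a 3 ∧
    2 * a 2 * a 8 - 12 * a 3 * a 7 + 30 * a 4 * a 6 - 20 * a 5 ^ 2 = kap a 4 := by
  have h : ∀ i ≤ 4, (Nat.choose 4 i : K) * kap a i = kapR a i := fun i hi =>
    mul_div_cancel₀ _ (choose4 h2 h3 i hi)
  have e0 := h 0 (by norm_num)
  have e1 := h 1 (by norm_num)
  have e2 := h 2 (by norm_num)
  have e3 := h 3 (by norm_num)
  have e4 := h 4 (by norm_num)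
  norm_num [Nat.choose, kapR] at e0 e1 e2 e3 e4
  refine ⟨?_, ?_, ?_, ?_, ?_⟩
  · rw [e0]
  · rw [e1]
  · rw [e2]
  · rw [e3]
  · rw [e4]

lemma hes_eqs (h2 : (2 : K) ≠ 0) (h3 : (3 : K) ≠ 0) (k : ℕ → K) :
    hes k 0 = 2 * k 0 * k 2 - 2 * k 1 ^ 2 ∧
    hes k 1 = k 0 * k 3 - k 1 * k 2 ∧
    3 * hes k 2 = k 0 * k 4 + 2 * k 1 * k 3 - 3 * k 2 ^ 2 ∧
    hes k 3 = k 1 * k 4 - k 2 * k 3 ∧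
    hes k 4 = 2 * k 2 * k 4 - 2 * k 3 ^ 2 := by
  have h : ∀ i ≤ 4, (Nat.choose 4 i : K) * hes k i = hesR k i := fun i hi =>
    mul_div_cancel₀ _ (choose4 h2 h3 i hi)
  have e0 := h 0 (by norm_num)
  have e1 := h 1 (by norm_num)
  have e2 := h 2 (by norm_num)
  have e3 := h 3 (by norm_num)
  have e4 := h 4 (by norm_num)
  norm_num [Nat.choose, hesR] at e0 e1 e2 e3 e4
  have h4 : (4 : K) ≠ 0 := by
    have : (4 : K) = 2 * 2 := by norm_num
    rw [this]; exact mul_ne_zero h2 h2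
  refine ⟨?_, ?_, ?_, ?_, ?_⟩
  · rw [e0]
  · apply mul_left_cancel₀ h4; linear_combination e1
  · apply mul_left_cancel₀ h2; linear_combination e2
  · apply mul_left_cancel₀ h4; linear_combination e3
  · rw [e4]

lemma hes34 (h2 : (2 : K) ≠ 0) (h3 : (3 : K) ≠ 0) (k : ℕ → K) (k3 : k 3 = 0) (k4 : k 4 = 0) :
    hes k 0 = 2 * k 0 * k 2 - 2 * k 1 ^ 2 ∧ hes k 1 = - (k 1 * k 2) ∧ hes k 2 = - k 2 ^ 2 ∧
    hes k 3 = 0 ∧ hes k 4 = 0 := by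
  obtain ⟨e0, e1, e2, e3, e4⟩ := hes_eqs h2 h3 k
  rw [k3, k4] at *
  refine ⟨e0, by rw [e1]; ring, ?_, by rw [e3]; ring, by rw [e4]; ring⟩
  apply mul_left_cancel₀ h3; linear_combination e2

/-- The case with all six auxiliary coefficients nonzero is impossible. -/
lemma algA_ne (h2 : (2 : K) ≠ 0) (h3 : (3 : K) ≠ 0) (h5 : (5 : K) ≠ 0)
    (r u m n a1 a7 : K) (hr : r ≠ 0) (hu : u ≠ 0) (hm : m ≠ 0) (hn : n ≠ 0)
    (E0 : (r * u * m / n) * (4 * m * n / u) - 6 * a1 * n - 10 * m ^ 2 = 0)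
    (E4 : (16 * n ^ 2 / (r * u)) * u - 6 * a7 * m - 10 * n ^ 2 = 0)
    (E1 : (r * u * m / n) * a7 - 5 * a1 * (4 * m * n / u) + 9 * u * n = 0)
    (E3 : (16 * n ^ 2 / (r * u)) * a1 - 5 * a7 * u + 9 * (4 * m * n / u) * m = 0) :
    a1 * a7 = 9 * (m * n) := by
  have F0 : 6 * a1 * n = m ^ 2 * (4 * r - 10) := by
    field_simp at E0
    linear_combination (-1) * E0
  have F4 : 6 * a7 * m * r = n ^ 2 * (16 - 10 * r) := by
    field_simp at E4
    linear_combination (-1) * E4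
  have F1 : r * u ^ 2 * m * a7 - 20 * a1 * m * n ^ 2 + 9 * u ^ 2 * n ^ 2 = 0 := by
    field_simp at E1
    linear_combination E1
  have F3 : 16 * n ^ 2 * a1 - 5 * a7 * u ^ 2 * r + 36 * m ^ 2 * n * r = 0 := by
    field_simp at E3
    linear_combination E3
  have G1 : u ^ 2 * n * (7 - r) = m ^ 3 * (8 * r - 20) := by
    have : (2 * 5 * n) * (u ^ 2 * n * (7 - r)) = (2 * 5 * n) * (m ^ 3 * (8 * r - 20)) := by
      linear_combination 6 * F1 - u ^ 2 * F4 + 20 * m * n * F0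
    exact mul_left_cancel₀ (mul_ne_zero (mul_ne_zero h2 h5) hn) this
  have G3 : u ^ 2 * n * (8 - 5 * r) = m ^ 3 * (28 * r - 16) := by
    have : (2 * 5 * n) * (u ^ 2 * n * (8 - 5 * r)) = (2 * 5 * n) * (m ^ 3 * (28 * r - 16)) := by
      linear_combination (-6 * m) * F3 + 16 * m * n * F0 - 5 * u ^ 2 * F4
    exact mul_left_cancel₀ (mul_ne_zero (mul_ne_zero h2 h5) hn) this
  have G : (2 * 2 * 3 * m ^ 3) * (r + 2) ^ 2 = 0 := by
    linear_combination (8 - 5 * r) * G1 - (7 - r) * G3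
  have hr2 : r + 2 = 0 := by
    rcases mul_eq_zero.1 G with h | h
    · exfalso
      exact mul_ne_zero (mul_ne_zero (mul_ne_zero h2 h2) h3) (pow_ne_zero 3 hm) h
    · exact pow_eq_zero_iff (two_ne_zero) |>.1 h
  have hr3 : r = -2 := by linear_combination hr2
  subst hr3
  have : (2 * 2 * 2 * 3 * 3 * m * n) * (a1 * a7) = (2 * 2 * 2 * 3 * 3 * m * n) * (9 * (m * n)) := by
    linear_combination (-6 * a7 * m * (-2)) * F0 + (18 * m ^ 2) * F4
  refine mul_left_cancel₀ ?_ this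
  simp [h2, h3, hm, hn]

lemma algA (h2 : (2 : K) ≠ 0) (h3 : (3 : K) ≠ 0) (h5 : (5 : K) ≠ 0) (h7 : (7 : K) ≠ 0)
    (a0 a1 a2 a3 a5 a6 a7 a8 c : K) (hc : c ≠ 0)
    (E0 : a0 * a6 - 6 * a1 * a5 - 10 * a3 ^ 2 = 0)
    (E4 : a8 * a2 - 6 * a7 * a3 - 10 * a5 ^ 2 = 0)
    (E1 : a0 * a7 - 5 * a1 * a6 + 9 * a2 * a5 = 0)
    (E3 : a8 * a1 - 5 * a7 * a2 + 9 * a6 * a3 = 0)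
    (hk : 2 * a0 * a8 - 4 * a1 * a7 - 16 * a2 * a6 + 68 * a3 * a5 = 6 * c)
    (hj : 2 * a0 * a8 - 16 * a1 * a7 + 56 * a2 * a6 - 112 * a3 * a5 = 24 * c)
    (hg : 2 * a0 * a8 + 24 * a1 * a7 - 44 * a2 * a6 - 72 * a3 * a5 = -36 * c) :
    a1 * a7 ≠ 0 ∧ a0 = 0 ∧ a2 = 0 ∧ a3 = 0 ∧ a5 = 0 ∧ a6 = 0 ∧ a8 = 0 := by
  have P2 : a2 * a6 = 4 * (a3 * a5) := by
    have : (2 * 2 * 3 * 5 * 7) * (a2 * a6) = (2 * 2 * 3 * 5 * 7) * (4 * (a3 * a5)) := by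
      linear_combination (-10 : K) * hk + 7 * hj + 3 * hg
    refine mul_left_cancel₀ ?_ this
    simp [h2, h3, h5, h7]
  have P1 : 2 * (a1 * a7) = -3 * c + 18 * (a3 * a5) := by
    have : (2 * 3) * (2 * (a1 * a7)) = (2 * 3) * (-3 * c + 18 * (a3 * a5)) := by
      linear_combination hk - hj + 72 * P2
    exact mul_left_cancel₀ (mul_ne_zero h2 h3) this
  have P0 : a0 * a8 = 16 * (a3 * a5) := by
    apply mul_left_cancel₀ h2
    linear_combination hk + 2 * P1 + 16 * P2
  have h10 : (10 : K) ≠ 0 := by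
    have : (10 : K) = 2 * 5 := by norm_num
    rw [this]; exact mul_ne_zero h2 h5
  have h6 : (6 : K) ≠ 0 := by
    have : (6 : K) = 2 * 3 := by norm_num
    rw [this]; exact mul_ne_zero h2 h3
  have h16 : (16 : K) ≠ 0 := by
    have : (16 : K) = 2 * 2 * 2 * 2 := by norm_num
    rw [this]; simp [h2]
  have h4 : (4 : K) ≠ 0 := by
    have : (4 : K) = 2 * 2 := by norm_num
    rw [this]; simp [h2]
  by_cases ht : a3 * a5 = 0
  · rw [ht, mul_zero] at P0 P2
    rw [ht, mul_zero, add_zero] at P1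
    have hne : a1 * a7 ≠ 0 := by
      intro h
      rw [h, mul_zero] at P1
      have : (-3 : K) * c ≠ 0 := mul_ne_zero (neg_ne_zero.2 h3) hc
      exact this P1.symm
    have ha1 := left_ne_zero_of_mul hne
    have ha7 := right_ne_zero_of_mul hne
    have h35 : a3 = 0 ∧ a5 = 0 := by
      rcases mul_eq_zero.1 ht with h | h
      · refine ⟨h, ?_⟩
        by_contra h'
        rw [h] at E0 E4
        have x1 : a0 * a6 ≠ 0 := by
          have : a0 * a6 = 6 * a1 * a5 := by linear_combination E0
          rw [this]; exact mul_ne_zero (mul_ne_zero h6 ha1) h'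
        have x2 : a2 = 0 := (mul_eq_zero.1 P2).resolve_right (right_ne_zero_of_mul x1)
        have x3 : 10 * a5 ^ 2 = 0 := by rw [x2] at E4; linear_combination (-1) * E4
        exact mul_ne_zero h10 (pow_ne_zero 2 h') x3
      · refine ⟨?_, h⟩
        by_contra h'
        rw [h] at E0 E4
        have x1 : a8 * a2 ≠ 0 := by
          have : a8 * a2 = 6 * a7 * a3 := by linear_combination E4
          rw [this]; exact mul_ne_zero (mul_ne_zero h6 ha7) h'
        have x2 : a6 = 0 := (mul_eq_zero.1 P2).resolve_left (right_ne_zero_of_mul x1)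
        have x3 : 10 * a3 ^ 2 = 0 := by rw [x2] at E0; linear_combination (-1) * E0
        exact mul_ne_zero h10 (pow_ne_zero 2 h') x3
    obtain ⟨rfl, rfl⟩ := h35
    have y0 : a0 = 0 := by
      by_contra h'
      have : a6 = 0 := by
        have : a0 * a6 = 0 := by linear_combination E0
        exact (mul_eq_zero.1 this).resolve_left h'
      rw [this] at E1
      exact mul_ne_zero h' ha7 (by linear_combination E1)
    have y8 : a8 = 0 := by
      by_contra h'
      have : a2 = 0 := by
        have : a8 * a2 = 0 := by linear_combination E4
        exact (mul_eq_zero.1 this).resolve_left h'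
      rw [this] at E3
      exact mul_ne_zero h' ha1 (by linear_combination E3)
    have y6 : a6 = 0 := by
      rw [y0] at E1
      by_contra h'
      exact mul_ne_zero (mul_ne_zero h5 ha1) h' (by linear_combination (-1) * E1)
    have y2 : a2 = 0 := by
      rw [y8] at E3
      by_contra h'
      exact mul_ne_zero (mul_ne_zero h5 ha7) h' (by linear_combination (-1) * E3)
    exact ⟨hne, y0, y2, rfl, rfl, y6, y8⟩
  · exfalso
    have ha3 := left_ne_zero_of_mul ht
    have ha5 := right_ne_zero_of_mul ht
    have n0 : a0 * a8 ≠ 0 := by rw [P0]; exact mul_ne_zero h16 ht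
    have n2 : a2 * a6 ≠ 0 := by rw [P2]; exact mul_ne_zero h4 ht
    have ha0 := left_ne_zero_of_mul n0
    have ha2 := left_ne_zero_of_mul n2
    obtain ⟨r, hr⟩ : ∃ r, r = a0 * a5 / (a2 * a3) := ⟨_, rfl⟩
    have hr0 : r ≠ 0 := by
      rw [hr]; exact div_ne_zero (mul_ne_zero ha0 ha5) (mul_ne_zero ha2 ha3)
    have q0 : a0 = r * a2 * a3 / a5 := by rw [hr]; field_simp
    have q6 : a6 = 4 * a3 * a5 / a2 := by field_simp; linear_combination P2
    have q8 : a8 = 16 * a5 ^ 2 / (r * a2) := by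
      have : a8 = 16 * (a3 * a5) / a0 := by rw [eq_div_iff ha0, ← P0]; ring
      rw [this, q0]; field_simp
    rw [q0, q6] at E0
    rw [q8] at E4
    rw [q0, q6] at E1
    rw [q8, q6] at E3
    have := algA_ne h2 h3 h5 r a2 a3 a5 a1 a7 hr0 ha2 ha3 ha5 E0 E4 E1 E3
    rw [this] at P1
    have : (3 : K) * c = 0 := by linear_combination P1
    exact mul_ne_zero h3 hc this

end algebra

section descent
variable {K : Type*} [Field K]

/-- The primes below `11` are invertible. -/
structure Ch (K : Type*) [Field K] : Prop where
  h2 : (2 : K) ≠ 0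
  h3 : (3 : K) ≠ 0
  h5 : (5 : K) ≠ 0
  h7 : (7 : K) ≠ 0

lemma num_ne (hK : Ch K) (i j k l : ℕ) : (2 ^ i * 3 ^ j * 5 ^ k * 7 ^ l : K) ≠ 0 := by
  simp [hK.h2, hK.h3, hK.h5, hK.h7]

lemma zero_of (u v : K) (hu : u ≠ 0) (h : u * v = 0) : v = 0 :=
  (mul_eq_zero.1 h).resolve_left hu

lemma eq_zero_num (hK : Ch K) (v : K) (i j k l : ℕ) (h : (2 ^ i * 3 ^ j * 5 ^ k * 7 ^ l : K) * v = 0) :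
    v = 0 := zero_of _ v (num_ne hK i j k l) h

/-- Only `a 1` and `a 7` nonzero. -/
lemma goal_diag [IsAlgClosed K] (hK : Ch K) (a : ℕ → K) (hne : a 1 * a 7 ≠ 0) (z0 : a 0 = 0)
    (z2 : a 2 = 0) (z3 : a 3 = 0) (z4 : a 4 = 0) (z5 : a 5 = 0) (z6 : a 6 = 0) (z8 : a 8 = 0) :
    Goal (form 8 a) := by
  have ha1 := left_ne_zero_of_mul hne
  have ha7 := right_ne_zero_of_mul hne
  obtain ⟨t, ht⟩ := IsAlgClosed.exists_pow_nat_eq (-(8 ^ 6 * a 1 ^ 7 / a 7)) (n := 48) (by norm_num)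
  have h8 : (8 : K) ≠ 0 := by
    have := num_ne hK 3 0 0 0
    norm_num at this; exact this
  have ht0 : t ≠ 0 := by
    rintro rfl
    rw [zero_pow (by norm_num)] at ht
    have : (8 : K) ^ 6 * a 1 ^ 7 / a 7 ≠ 0 :=
      div_ne_zero (mul_ne_zero (pow_ne_zero _ h8) (pow_ne_zero _ ha1)) ha7
    exact this (neg_eq_zero.1 ht.symm)
  obtain ⟨d, hd⟩ : ∃ d, d = 8 * a 1 / t ^ 7 := ⟨_, rfl⟩
  have e1 : t ^ 7 * d = 8 * a 1 := by rw [hd]; field_simp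
  have e7 : t * d ^ 7 = -(8 * a 7) := by
    have e : t ^ 48 * (t * d ^ 7) = t ^ 48 * (-(8 * a 7)) := by
      have l : t ^ 48 * (t * d ^ 7) = (t ^ 7 * d) ^ 7 := by ring
      rw [l, e1, ht]
      field_simp
    exact mul_left_cancel₀ (pow_ne_zero _ ht0) e
  refine ⟨!![t, 0; 0, d], ?_, ?_⟩
  · have hd0 : d ≠ 0 := by
      rw [hd]; exact div_ne_zero (mul_ne_zero h8 ha1) (pow_ne_zero _ ht0)
    simp [ht0, hd0]
  · simp only [f0, act_sub, act_mul, act_pow, act_X]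
    have c1 : (C t : MvPolynomial (Fin 2) K) ^ 7 * C d = 8 * C (a 1) := by
      rw [← C_num 8, ← C_pow, ← C_mul, ← C_mul, e1]
    have c7 : (C t : MvPolynomial (Fin 2) K) * C d ^ 7 = -(8 * C (a 7)) := by
      rw [← C_num 8, ← C_pow, ← C_mul, ← C_mul, ← C_neg, e7]
    simp only [form, Finset.sum_range_succ, Finset.sum_range_zero, z0, z2, z3, z4, z5, z6, z8]
    simp [Nat.choose, C_num]
    linear_combination (-(X 0 ^ 7 * X 1)) * c1 + (X 0 * X 1 ^ 7) * c7

lemma L4 [IsAlgClosed K] (hK : Ch K) (a : ℕ → K) (ha : Good a) (k1 : kap a 1 = 0)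
    (k3 : kap a 3 = 0) (k4 : kap a 4 = 0) (k2 : kap a 2 ≠ 0) : Goal (form 8 a) := by
  obtain ⟨h2, h3, h5, h7⟩ := id hK
  obtain ⟨hr, hs⟩ := ha
  rw [Rel_form h2 h3 h5 h7] at hr
  obtain ⟨r4, r6, r8, -, -, r5, r7, r9⟩ := hr
  obtain ⟨e0, e1, e2, e3, e4⟩ := kap_eqs h2 h3 a
  obtain ⟨g0, g1, g2, g3, g4⟩ := hes34 h2 h3 (kap a) k3 k4
  simp only [pair, con, Nat.reduceAdd, g0, g1, g2, g3, g4, k1, k3, k4] at r4 r6 r8 r5 r7 r9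
  rw [k1] at e1
  rw [k3] at e3
  rw [k4] at e4
  generalize kap a 2 = c at *
  generalize kap a 0 = b at *
  have J2 : pair8 a a = 24 * c := by
    have x1 : pair8 a a ^ 2 = 576 * c ^ 2 := by linear_combination (-1) * r4
    have x2 : (2 ^ 6 * 3 ^ 2 * 5 ^ 0 * 7 ^ 0 : K) * (c ^ 2 * (pair8 a a - 24 * c)) = 0 := by
      linear_combination (-1) * pair8 a a * x1 + r6
    have x3 := zero_of _ _ (pow_ne_zero 2 k2) (eq_zero_num hK _ _ _ _ _ x2)
    linear_combination x3
  rw [J2] at r8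
  have s5 : b ^ 2 * a 8 + 12 * c * b * a 6 + 36 * c ^ 2 * a 4 = 0 := by linear_combination r5
  have s7 : 2 * b ^ 2 * a 8 + 6 * c * b * a 6 - 36 * c ^ 2 * a 4 = 0 := by
    apply zero_of c _ k2; linear_combination r7
  have s9 : 4 * b ^ 2 * a 8 - 24 * c * b * a 6 + 36 * c ^ 2 * a 4 = 0 := by
    apply zero_of (c ^ 2) _ (pow_ne_zero 2 k2); linear_combination r9
  have A0 : b ^ 2 * a 8 = 0 := by
    apply eq_zero_num hK _ 0 3 0 0; linear_combination 3 * s9 + 3 * s5 + 6 * s7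
  have D0 : a 4 = 0 := by
    apply zero_of (c ^ 2) _ (pow_ne_zero 2 k2)
    apply eq_zero_num hK _ 2 3 0 0
    linear_combination s9 + 2 * s5 - 6 * A0
  have B0 : b * a 6 = 0 := by
    apply zero_of c _ k2
    apply eq_zero_num hK _ 2 1 0 0
    linear_combination s5 - A0 - 36 * c ^ 2 * D0
  simp only [pair8] at J2
  by_cases hb : b = 0
  · subst hb
    have gg : gamR a 4 = -36 * c := by
      have : gamR a 4 = 70 * gam a 4 := by
        have := mul_div_cancel₀ (gamR a 4) (choose8 h2 h5 h7 4 (by norm_num))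
        rw [← this]; norm_num [gam, Nat.choose]
      rw [this]
      have x : (2 ^ 10 * 3 ^ 2 * 5 ^ 0 * 7 ^ 0 : K) * (c ^ 3 * (70 * gam a 4 + 36 * c)) = 0 := by
        linear_combination (-1) * r8
      have x3 := zero_of _ _ (pow_ne_zero 3 k2) (eq_zero_num hK _ _ _ _ _ x)
      linear_combination x3
    simp only [gamR] at gg
    rw [D0] at e0 e1 e2 e3 e4 J2 gg
    obtain ⟨hne, y0, y2, y3, y5, y6, y8⟩ := algA h2 h3 h5 h7 (a 0) (a 1) (a 2) (a 3) (a 5) (a 6)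
      (a 7) (a 8) c k2
      (by apply eq_zero_num hK _ 1 0 0 0; linear_combination e0)
      (by apply eq_zero_num hK _ 1 0 0 0; linear_combination e4)
      (by apply eq_zero_num hK _ 2 0 0 0; linear_combination e1)
      (by apply eq_zero_num hK _ 2 0 0 0; linear_combination e3)
      (by linear_combination e2) (by linear_combination J2) (by linear_combination gg)
    exact goal_diag hK a hne y0 y2 y3 D0 y5 y6 y8
  · exfalso
    have z8 : a 8 = 0 := zero_of _ _ (pow_ne_zero 2 hb) A0
    have z6 : a 6 = 0 := zero_of _ _ hb B0
    have a7 : a 7 ≠ 0 := fun h => no_a8a7 a hs z8 h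
    simp only [z8, z6, D0] at e0 e1 e2 e3 e4 J2
    have z2 : a 2 = 0 := by
      apply zero_of (a 7) _ a7
      apply eq_zero_num hK _ 2 0 1 0; linear_combination (-1) * e3
    have z35 : a 3 * a 5 = 0 := by
      apply eq_zero_num hK _ 7 1 0 0; linear_combination 4 * e2 - J2
    have z5 : a 5 = 0 := by
      rcases mul_eq_zero.1 z35 with h | h
      · rw [h] at e4
        have : a 5 ^ 2 = 0 := by
          apply eq_zero_num hK _ 2 0 1 0; linear_combination (-1) * e4
        exact pow_eq_zero_iff two_ne_zero |>.1 this
      · exact h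
    have z3 : a 3 = 0 := by
      rw [z5] at e4
      apply zero_of (a 7) _ a7
      apply eq_zero_num hK _ 2 1 0 0; linear_combination (-1) * e4
    apply hb
    rw [← e0, z5, z3]; ring

end descent

section descent2
variable {K : Type*} [Field K]

lemma L7 (hK : Ch K) (a : ℕ → K) (ha : Good a) (k1 : kap a 1 = 0) (k2 : kap a 2 = 0)
    (k3 : kap a 3 = 0) (k4 : kap a 4 = 0) (z8 : a 8 = 0) (a7 : a 7 ≠ 0) (z6 : a 6 = 0) : False := by
  obtain ⟨h2, h3, h5, h7⟩ := id hK
  obtain ⟨hr, hs⟩ := ha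
  rw [Rel_form h2 h3 h5 h7] at hr
  obtain ⟨r4, -⟩ := hr
  obtain ⟨-, e1, e2, e3, e4⟩ := kap_eqs h2 h3 a
  have J2 : pair8 a a = 0 := by
    have : pair8 a a ^ 2 = 0 := by
      rw [← r4]; simp [pair, k1, k2, k3, k4]
    exact pow_eq_zero_iff two_ne_zero |>.1 this
  simp only [pair8] at J2
  simp only [k1, k2, k3, k4, z6, z8] at e1 e2 e3 e4 J2
  have f4 : 3 * (a 3 * a 7) = -(5 * a 5 ^ 2) := by
    have := eq_zero_num hK (3 * (a 3 * a 7) + 5 * a 5 ^ 2) 2 0 0 0 (by linear_combination (-1) * e4)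
    linear_combination this
  have f3 : a 2 * a 7 = -(a 4 * a 5) := by
    have := eq_zero_num hK (a 2 * a 7 + a 4 * a 5) 2 0 1 0 (by linear_combination (-1) * e3)
    linear_combination this
  have f2 : 64 * (a 3 * a 5) = 45 * a 4 ^ 2 := by
    have := eq_zero_num hK (64 * (a 3 * a 5) - 45 * a 4 ^ 2) 1 1 0 0 (by linear_combination 4 * e2 - J2)
    linear_combination this
  have f1 : 2 * (a 1 * a 7) = 34 * (a 3 * a 5) - 25 * a 4 ^ 2 := by
    have := eq_zero_num hK (2 * (a 1 * a 7) - (34 * (a 3 * a 5) - 25 * a 4 ^ 2)) 1 0 0 0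
      (by linear_combination (-1) * e2)
    linear_combination this
  have f0 : a 0 * a 7 = -9 * (a 2 * a 5) + 5 * (a 3 * a 4) := by
    have := eq_zero_num hK (a 0 * a 7 - (-9 * (a 2 * a 5) + 5 * (a 3 * a 4))) 2 0 0 0
      (by linear_combination e1)
    linear_combination this
  obtain ⟨s, q5, q4, q3⟩ : ∃ s, a 5 = -3 * s ^ 2 * a 7 ∧ a 4 = 8 * s ^ 3 * a 7 ∧
      a 3 = -15 * s ^ 4 * a 7 := by
    by_cases z5 : a 5 = 0
    · refine ⟨0, ?_, ?_, ?_⟩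
      · rw [z5]; ring
      · have : a 4 ^ 2 = 0 := by
          apply eq_zero_num hK _ 0 2 1 0
          rw [z5] at f2
          linear_combination (-1) * f2
        rw [pow_eq_zero_iff two_ne_zero |>.1 this]; ring
      · rw [z5] at f4
        have : a 3 = 0 := by
          apply zero_of (a 7) _ a7
          apply eq_zero_num hK _ 0 1 0 0
          linear_combination f4
        rw [this]; ring
    · have h8 : (8 : K) ≠ 0 := by
        have := num_ne hK 3 0 0 0
        norm_num at this; exact this
      have h85 : (8 : K) * a 5 ≠ 0 := mul_ne_zero h8 z5
      obtain ⟨s, hs⟩ : ∃ s, s = -3 * a 4 / (8 * a 5) := ⟨_, rfl⟩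
      rw [eq_div_iff h85] at hs
      have q3 : a 3 = 5 * s ^ 2 * a 5 := by
        have : (2 ^ 6 * 3 ^ 2 * 5 ^ 0 * 7 ^ 0 : K) * (a 5 * (a 3 - 5 * s ^ 2 * a 5)) = 0 := by
          linear_combination 9 * f2 - 45 * (s * (8 * a 5) - 3 * a 4) * hs
        have := zero_of _ _ z5 (eq_zero_num hK _ _ _ _ _ this)
        linear_combination this
      have q5 : a 5 = -3 * s ^ 2 * a 7 := by
        have : (2 ^ 0 * 3 ^ 0 * 5 ^ 1 * 7 ^ 0 : K) * (a 5 * (a 5 + 3 * s ^ 2 * a 7)) = 0 := by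
          linear_combination f4 - 3 * a 7 * q3
        have := zero_of _ _ z5 (eq_zero_num hK _ _ _ _ _ this)
        linear_combination this
      refine ⟨s, q5, ?_, ?_⟩
      · have := eq_zero_num hK (a 4 - 8 * s ^ 3 * a 7) 0 1 0 0
          (by linear_combination hs - 8 * s * q5)
        linear_combination this
      · rw [q3, q5]; ring
  have q2 : a 2 = 24 * s ^ 5 * a 7 := by
    apply mul_right_cancel₀ a7
    rw [f3, q4, q5]; ring
  have q1 : a 1 = -35 * s ^ 6 * a 7 := by
    apply mul_right_cancel₀ a7
    apply mul_left_cancel₀ h2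
    rw [f1, q4, q5, q3]; ring
  have q0 : a 0 = 48 * s ^ 7 * a 7 := by
    apply mul_right_cancel₀ a7
    rw [f0, q4, q5, q3, q2]; ring
  apply not_sq_X (form 8 a) (C (8 * a 7) * X 0 * (X 1 - C s * X 0) ^ 4 * (X 1 + C (6 * s) * X 0)) s hs
  simp only [form, Finset.sum_range_succ, Finset.sum_range_zero, q0, q1, q2, q3, q4, q5, z6, z8]
  simp [Nat.choose, C_num]
  ring

lemma shear_step (hK : Ch K) (a : ℕ → K) (ha : Good a) (s : K) : ∃ a' : ℕ → K, Good a' ∧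
    (Goal (form 8 a') → Goal (form 8 a)) ∧ a' 8 = a 8 ∧ a' 7 = a 7 + s * a 8 ∧
    a' 6 = a 6 + 2 * s * a 7 + s ^ 2 * a 8 ∧ kap a' 4 = kap a 4 ∧ kap a' 3 = kap a 3 + s * kap a 4 ∧
    kap a' 2 = kap a 2 + 2 * s * kap a 3 + s ^ 2 * kap a 4 ∧
    kap a' 1 = kap a 1 + 3 * s * kap a 2 + 3 * s ^ 2 * kap a 3 + s ^ 3 * kap a 4 := by
  obtain ⟨h2, h3, h5, h7⟩ := id hK
  obtain ⟨a', e, hg, hi, hk⟩ := step h2 h3 h5 h7 a ha (shear s) (by rw [shear_det]; exact isUnit_one)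
  rw [act_shear8] at e
  have ei := form_inj 8 (choose8 h2 h5 h7) _ _ e
  have E8 := ei 8 (by norm_num)
  have E7 := ei 7 (by norm_num)
  have E6 := ei 6 (by norm_num)
  have K4 := hk 4 (by norm_num)
  have K3 := hk 3 (by norm_num)
  have K2 := hk 2 (by norm_num)
  have K1 := hk 1 (by norm_num)
  simp [sh, D] at E8 E7 E6
  rw [shear_det] at K4 K3 K2 K1
  simp [sub4, D, shear] at K4 K3 K2 K1
  refine ⟨a', hg, hi, E8, E7, ?_, K4, K3, ?_, ?_⟩
  · rw [E6]; ring
  · rw [K2]; ring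
  · rw [K1]; ring

lemma L6 (hK : Ch K) (a : ℕ → K) (ha : Good a) (k1 : kap a 1 = 0) (k2 : kap a 2 = 0)
    (k3 : kap a 3 = 0) (k4 : kap a 4 = 0) (z8 : a 8 = 0) : False := by
  by_cases a7 : a 7 = 0
  · exact no_a8a7 a ha.2 z8 a7
  · obtain ⟨a', hg, -, E8, E7, E6, K4, K3, K2, K1⟩ := shear_step hK a ha (-a 6 / (2 * a 7))
    refine L7 hK a' hg ?_ ?_ ?_ ?_ ?_ ?_ ?_
    · rw [K1, k1, k2, k3, k4]; ring
    · rw [K2, k2, k3, k4]; ring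
    · rw [K3, k3, k4]; ring
    · rw [K4, k4]
    · rw [E8, z8]
    · rw [E7, z8, mul_zero, add_zero]; exact a7
    · have := hK.h2
      rw [E6, z8]; field_simp; ring

lemma L5 [IsAlgClosed K] (hK : Ch K) (a : ℕ → K) (ha : Good a) (k2 : kap a 2 = 0)
    (k3 : kap a 3 = 0) (k4 : kap a 4 = 0) : False := by
  obtain ⟨h2, h3, h5, h7⟩ := id hK
  have hr := ha.1
  rw [Rel_form h2 h3 h5 h7] at hr
  obtain ⟨-, -, -, -, -, r5, r7, r9⟩ := hr
  obtain ⟨g0, g1, g2, g3, g4⟩ := hes34 h2 h3 (kap a) k3 k4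
  simp only [pair, con, Nat.reduceAdd, g0, g1, g2, g3, g4, k2, k3, k4] at r5 r7 r9
  by_cases k1 : kap a 1 = 0
  · by_cases k0 : kap a 0 = 0
    · obtain ⟨N, hN, hroot⟩ := exists_root 8 (by norm_num) a
      obtain ⟨a', e, hg, -, hk⟩ := step h2 h3 h5 h7 a ha N hN
      rw [← e, eval_form] at hroot
      refine L6 hK a' hg ?_ ?_ ?_ ?_ hroot
      all_goals
        rw [hk _ (by norm_num)]
        simp [sub4, D, k0, k1, k2, k3, k4]
    · rw [k1] at r5
      have : a 8 = 0 := by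
        apply zero_of (kap a 0 ^ 2) _ (pow_ne_zero 2 k0)
        linear_combination r5
      exact L6 hK a ha k1 k2 k3 k4 this
  · have z8 : a 8 = 0 := by
      apply zero_of (kap a 1 ^ 4) _ (pow_ne_zero 4 k1)
      apply eq_zero_num hK _ 2 0 0 0
      linear_combination r9
    have z7 : a 7 = 0 := by
      apply zero_of (kap a 1 ^ 3) _ (pow_ne_zero 3 k1)
      apply eq_zero_num hK _ 3 0 0 0
      linear_combination r7 + 2 * kap a 1 ^ 2 * kap a 0 * z8
    exact no_a8a7 a ha.2 z8 z7

lemma L3 [IsAlgClosed K] (hK : Ch K) (a : ℕ → K) (ha : Good a)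
    (k3 : kap a 3 = 0) (k4 : kap a 4 = 0) : Goal (form 8 a) := by
  by_cases k2 : kap a 2 = 0
  · exact (L5 hK a ha k2 k3 k4).elim
  · obtain ⟨a', hg, hi, -, -, -, K4, K3, K2, K1⟩ :=
      shear_step hK a ha (-kap a 1 / (3 * kap a 2))
    apply hi
    refine L4 hK a' hg ?_ ?_ ?_ ?_
    · have := hK.h3
      rw [K1, k3, k4]; field_simp; ring
    · rw [K3, k3, k4]; ring
    · rw [K4, k4]
    · rw [K2, k3, k4]; simpa using k2

lemma L2 [IsAlgClosed K] (hK : Ch K) (a : ℕ → K) (ha : Good a) (k2 : kap a 2 = 0)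
    (k3 : kap a 3 ≠ 0) (k4 : kap a 4 = 0) : Goal (form 8 a) := by
  obtain ⟨h2, h3, h5, h7⟩ := id hK
  have hr := ha.1
  rw [Rel_form h2 h3 h5 h7] at hr
  obtain ⟨r4, r6, -⟩ := hr
  obtain ⟨g0, g1, g2, g3, g4⟩ := hes_eqs h2 h3 (kap a)
  simp only [pair, g0, g1, g3, g4] at r4 r6
  have hd : 64 * kap a 1 ^ 3 + 27 * kap a 0 ^ 2 * kap a 3 = 0 := by
    rw [k2, k4] at r4 r6
    have x1 : pair8 a a ^ 2 = -768 * (kap a 1 * kap a 3) := by linear_combination (-1) * r4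
    have x2 : pair8 a a ^ 3 = 13824 * (kap a 0 * kap a 3 ^ 2) := by linear_combination r6
    have x3 : (pair8 a a ^ 2) ^ 3 = (pair8 a a ^ 3) ^ 2 := by ring
    rw [x1, x2] at x3
    have := eq_zero_num hK (kap a 3 ^ 3 * (64 * kap a 1 ^ 3 + 27 * kap a 0 ^ 2 * kap a 3)) 18 3 0 0
      (by linear_combination (-1) * x3)
    exact zero_of _ _ (pow_ne_zero 3 k3) this
  obtain ⟨z, p1, p0⟩ : ∃ z, kap a 1 + 3 * kap a 3 * z ^ 2 = 0 ∧
      kap a 0 + 4 * kap a 1 * z + 4 * kap a 3 * z ^ 3 = 0 := by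
    by_cases k1 : kap a 1 = 0
    · have k0 : kap a 0 = 0 := by
        rw [k1] at hd
        have := eq_zero_num hK (kap a 3 * kap a 0 ^ 2) 0 3 0 0 (by linear_combination hd)
        exact pow_eq_zero_iff two_ne_zero |>.1 (zero_of _ _ k3 this)
      exact ⟨0, by rw [k1]; ring, by rw [k1, k0]; ring⟩
    · have h8 : (8 : K) ≠ 0 := by
        have := num_ne hK 3 0 0 0
        norm_num at this; exact this
      have h81 : (8 : K) * kap a 1 ≠ 0 := mul_ne_zero h8 k1
      obtain ⟨z, hz⟩ : ∃ z, z = -3 * kap a 0 / (8 * kap a 1) := ⟨_, rfl⟩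
      rw [eq_div_iff h81] at hz
      have p1 : kap a 1 + 3 * kap a 3 * z ^ 2 = 0 := by
        apply zero_of _ _ (pow_ne_zero 2 k1)
        apply eq_zero_num hK _ 6 0 0 0
        linear_combination hd + 3 * kap a 3 * (z * (8 * kap a 1) - 3 * kap a 0) * hz
      refine ⟨z, p1, ?_⟩
      apply eq_zero_num hK _ 0 1 0 0
      linear_combination 4 * z * p1 + hz
  obtain ⟨a', e, hg, hi, hk⟩ := step h2 h3 h5 h7 a ha !![0, 1; 1, z] (by simp)
  apply hi
  refine L3 hK a' hg ?_ ?_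
  · rw [hk 3 (by norm_num)]
    simp [sub4, D, k2, k4]
    linear_combination p1
  · rw [hk 4 (by norm_num)]
    simp [sub4, D, k2, k4]
    linear_combination p0

lemma L1 [IsAlgClosed K] (hK : Ch K) (a : ℕ → K) (ha : Good a) (k4 : kap a 4 = 0) :
    Goal (form 8 a) := by
  by_cases k3 : kap a 3 = 0
  · exact L3 hK a ha k3 k4
  · obtain ⟨a', hg, hi, -, -, -, K4, K3, K2, K1⟩ :=
      shear_step hK a ha (-kap a 2 / (2 * kap a 3))
    apply hi
    refine L2 hK a' hg ?_ ?_ ?_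
    · have := hK.h2
      rw [K2, k4]; field_simp; ring
    · rw [K3, k4]; simpa using k3
    · rw [K4, k4]

lemma L0 [IsAlgClosed K] (hK : Ch K) (a : ℕ → K) (ha : Good a) : Goal (form 8 a) := by
  obtain ⟨N, hN, hroot⟩ := exists_root 4 (by norm_num) (kap a)
  rw [act_form4, eval_form] at hroot
  obtain ⟨a', e, hg, hi, hk⟩ := step hK.h2 hK.h3 hK.h5 hK.h7 a ha N hN
  apply hi
  apply L1 hK a' hg
  rw [hk 4 (by norm_num), hroot, mul_zero]

lemma Rel_f0 (hK : Ch K) : Rel (f0 : MvPolynomial (Fin 2) K) := by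
  obtain ⟨h2, h3, h5, h7⟩ := id hK
  have h8 : (8 : K) ≠ 0 := by
    have := num_ne hK 3 0 0 0
    norm_num at this; exact this
  have e : (f0 : MvPolynomial (Fin 2) K) =
      form 8 (fun i => if i = 1 then 1 / 8 else if i = 7 then -(1 / 8) else 0) := by
    simp only [form, Finset.sum_range_succ, Finset.sum_range_zero, f0]
    have : (8 : MvPolynomial (Fin 2) K) * C (8⁻¹) = 1 := by
      rw [← C_num 8, ← C_mul, mul_inv_cancel₀ h8, C_1]
    simp [Nat.choose, C_num]
    linear_combination (-(X 0 ^ 7 * X 1) + X 0 * X 1 ^ 7) * this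
  rw [e, Rel_form h2 h3 h5 h7]
  have h4 : (4 : K) ≠ 0 := by
    have := num_ne hK 2 0 0 0
    norm_num at this; exact this
  have h6 : (6 : K) ≠ 0 := by
    have := num_ne hK 1 1 0 0
    norm_num at this; exact this
  have h70 : (70 : K) ≠ 0 := by
    have := num_ne hK 1 0 1 1
    norm_num at this; exact this
  simp [pair, pair8, con, kap, kapR, hes, hesR, gam, gamR, Nat.choose]
  refine ⟨?_, ?_, ?_, ?_⟩
  all_goals
    field_simp
    norm_num

lemma Ch_of (hchar : ringChar K = 0 ∨ 11 ≤ ringChar K) : Ch K := by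
  have key : ∀ n : ℕ, 0 < n → n < 11 → (n : K) ≠ 0 := by
    intro n hn hn' h
    have hd := (ringChar.spec K n).1 h
    rcases hchar with h0 | h1
    · rw [h0] at hd
      have := Nat.eq_zero_of_zero_dvd hd
      omega
    · have := Nat.le_of_dvd hn hd
      omega
  exact ⟨by exact_mod_cast key 2 (by norm_num) (by norm_num),
    by exact_mod_cast key 3 (by norm_num) (by norm_num),
    by exact_mod_cast key 5 (by norm_num) (by norm_num),
    by exact_mod_cast key 7 (by norm_num) (by norm_num)⟩

lemma main [IsAlgClosed K] (hchar : ringChar K = 0 ∨ 11 ≤ ringChar K)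
    (f : MvPolynomial (Fin 2) K) (hf : f.IsHomogeneous 8) (hsf : Squarefree f) :
    Rel f ↔ Goal f := by
  have hK := Ch_of hchar
  constructor
  · intro h
    obtain ⟨a, ha⟩ := exists_form 8 (choose8 hK.h2 hK.h5 hK.h7) f hf
    rw [ha] at h hsf ⊢
    exact L0 hK a ⟨h, hsf⟩
  · rintro ⟨M, -, rfl⟩
    exact Rel_act M _ (Rel_f0 hK)

end descent2

end U6

/-- Identification of the stratum `U₆`: a squarefree binary octic `f` over an algebraically
closed field of characteristic `0` or `≥ 11` satisfies `96·J₄ = J₂²`, `2304·J₆ = −J₂³`,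
`17920·J₈ = J₂⁴`, `430080·J₁₀ = −J₂⁵` and `J₃ = J₅ = J₇ = J₉ = 0` iff `f` is
`GL₂(K)`-equivalent to `X⁷Z − XZ⁷` (the homogenization of `x⁷ − x`); equivalently the
genus-3 curve `y² = f(x,1)` has automorphism group `U₆ = ⟨S,T : S¹² = T² = 1, TST = S⁵⟩`
(of order 24) iff these relations hold, and such a curve is `K`-isomorphic to
`y² = x⁷ − x`. -/
theorem statement17 {K : Type*} [Field K] [IsAlgClosed K]
    (hchar : ringChar K = 0 ∨ 11 ≤ ringChar K)
    (f : MvPolynomial (Fin 2) K) (hf : f.IsHomogeneous 8) (hsf : Squarefree f) :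
    (96 * shJ4 f = shJ2 f ^ 2 ∧ 2304 * shJ6 f = -(shJ2 f ^ 3) ∧
      17920 * shJ8 f = shJ2 f ^ 4 ∧ 430080 * shJ10 f = -(shJ2 f ^ 5) ∧
      shJ3 f = 0 ∧ shJ5 f = 0 ∧ shJ7 f = 0 ∧ shJ9 f = 0) ↔
    ∃ M : Matrix (Fin 2) (Fin 2) K, IsUnit M.det ∧
      f = bind₁ (fun j : Fin 2 => C (M j 0) * X 0 + C (M j 1) * X 1)
        (X 0 ^ 7 * X 1 - X 0 * X 1 ^ 7) := by
    exact U6.main hchar f hf hsf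
end

section
/- Let K be an algebraically closed field of characteristic 0 or at least 11, and let f ∈ K[X,Z] be a squarefree binary octic with Shioda invariants J₂,…,J₁₀. Then J₂(f) = J₃(f) = J₄(f) = J₅(f) = J₆(f) = J₈(f) = J₉(f) = J₁₀(f) = 0 if and only if f is GL₂(K)-equivalent to X⁷Z − Z⁸ (the homogenization of x⁷ − 1), and in that case J₇(f) ≠ 0; equivalently, the genus-3 hyperelliptic curve y² = f(x,1) has automorphism group C₁₄ if and only if these relations hold, and such a curve is K-isomorphic to y² = x⁷ − 1. -/
open MvPolynomial

namespace Octic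

/-- The normalised binary form `Σ C(r,i) a_i X^(r-i) Z^i`, built by Pascal recursion. -/
noncomputable def bform {k : Type*} [CommRing k] : ℕ → (ℕ → k) → MvPolynomial (Fin 2) k
  | 0, a => C (a 0)
  | (r + 1), a => X 0 * bform r a + X 1 * bform r (fun i => a (i + 1))

section basics
variable {k : Type*} [CommRing k]

theorem bform_congr (n : ℕ) (a b : ℕ → k) (h : ∀ i, i ≤ n → a i = b i) :
    bform n a = bform n b := by
  induction n generalizing a b with
  | zero => simp [bform, h 0 le_rfl]
  | succ n ih =>
    simp only [bform]
    rw [ih a b (fun i hi => h i (by omega)), ih _ (fun i => b (i + 1)) (fun i hi => h _ (by omega))]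

theorem bform_add (n : ℕ) (a b : ℕ → k) :
    bform n (fun i => a i + b i) = bform n a + bform n b := by
  induction n generalizing a b with
  | zero => simp [bform]
  | succ n ih =>
    simp only [bform]
    rw [ih a b, ih (fun i => a (i + 1)) (fun i => b (i + 1))]
    ring

theorem bform_smul (n : ℕ) (c : k) (a : ℕ → k) :
    bform n (fun i => c * a i) = C c * bform n a := by
  induction n generalizing a with
  | zero => simp [bform]
  | succ n ih =>
    simp only [bform]
    rw [ih a, ih (fun i => a (i + 1))]
    ring

theorem bform_homog (n : ℕ) (a : ℕ → k) : (bform n a).IsHomogeneous n := by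
  induction n generalizing a with
  | zero => exact isHomogeneous_C _ _
  | succ n ih =>
    rw [bform, add_comm n 1]
    exact ((isHomogeneous_X _ _).mul (ih _)).add ((isHomogeneous_X _ _).mul (ih _))

theorem pderiv0_bform (n : ℕ) (a : ℕ → k) :
    pderiv 0 (bform (n + 1) a) = C ((n + 1 : ℕ) : k) * bform n a := by
  induction n generalizing a with
  | zero => simp [bform, Derivation.leibniz]
  | succ n ih =>
    rw [bform]
    simp only [map_add, Derivation.leibniz, ih, smul_eq_mul, pderiv_X_self,
      pderiv_X_of_ne (show (1 : Fin 2) ≠ 0 by decide)]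
    simp only [bform]
    push_cast
    simp only [map_add, map_one, map_natCast]
    ring

theorem pderiv1_bform (n : ℕ) (a : ℕ → k) :
    pderiv 1 (bform (n + 1) a) = C ((n + 1 : ℕ) : k) * bform n (fun i => a (i + 1)) := by
  induction n generalizing a with
  | zero => simp [bform, Derivation.leibniz]
  | succ n ih =>
    rw [bform]
    simp only [map_add, Derivation.leibniz, ih, smul_eq_mul, pderiv_X_self,
      pderiv_X_of_ne (show (0 : Fin 2) ≠ 1 by decide)]
    simp only [bform]
    push_cast
    simp only [map_add, map_one, map_natCast]
    ring

theorem dX_bform (m n : ℕ) (a : ℕ → k) :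
    dX m (bform (n + m) a) = C (((n + m).descFactorial m : ℕ) : k) * bform n a := by
  induction m with
  | zero => simp [dX]
  | succ m ih =>
    have hs : ∀ p : MvPolynomial (Fin 2) k, dX (m + 1) p = dX m (pderiv 0 p) := fun p => by
      simp [dX, Function.iterate_succ_apply]
    have hc : ∀ (c : k) (p : MvPolynomial (Fin 2) k), dX m (C c * p) = C c * dX m p := by
      intro c p
      clear ih hs
      induction m generalizing p with
      | zero => simp [dX]
      | succ m ihm =>
        simp only [dX, Function.iterate_succ_apply, pderiv_C_mul] at ihm ⊢
        rw [← ihm]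
    rw [hs, ← add_assoc, pderiv0_bform, hc, ih, ← mul_assoc, ← map_mul, Nat.succ_descFactorial_succ]
    push_cast
    rfl

theorem dZ_bform (m n : ℕ) (a : ℕ → k) :
    dZ m (bform (n + m) a) =
      C (((n + m).descFactorial m : ℕ) : k) * bform n (fun i => a (i + m)) := by
  induction m generalizing a with
  | zero => simp [dZ]
  | succ m ih =>
    have hs : ∀ p : MvPolynomial (Fin 2) k, dZ (m + 1) p = dZ m (pderiv 1 p) := fun p => by
      simp [dZ, Function.iterate_succ_apply]
    have hc : ∀ (c : k) (p : MvPolynomial (Fin 2) k), dZ m (C c * p) = C c * dZ m p := by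
      intro c p
      clear ih hs
      induction m generalizing p with
      | zero => simp [dZ]
      | succ m ihm =>
        simp only [dZ, Function.iterate_succ_apply, pderiv_C_mul] at ihm ⊢
        rw [← ihm]
    rw [hs, ← add_assoc, pderiv1_bform, hc, ih, ← mul_assoc, ← map_mul, Nat.succ_descFactorial_succ]
    push_cast
    simp only [add_assoc]

theorem dX_C_mul (m : ℕ) (c : k) (p : MvPolynomial (Fin 2) k) :
    dX m (C c * p) = C c * dX m p := by
  induction m generalizing p with
  | zero => simp [dX]
  | succ m ihm =>
    simp only [dX, Function.iterate_succ_apply, pderiv_C_mul] at ihm ⊢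
    rw [← ihm]

theorem dXdZ_bform (r m n : ℕ) (a : ℕ → k) (h : m + n ≤ r) :
    dX m (dZ n (bform r a)) =
      C ((r.descFactorial (m + n) : ℕ) : k) * bform (r - (m + n)) (fun i => a (i + n)) := by
  obtain ⟨s, rfl⟩ := Nat.exists_eq_add_of_le h
  have e : m + n + s = (s + m) + n := by ring
  have e2 : m + n + s - (m + n) = s := by omega
  rw [e2, e, dZ_bform, dX_C_mul, dX_bform, ← mul_assoc, ← map_mul, ← Nat.cast_mul]
  congr 3
  have := Nat.descFactorial_mul_descFactorial (n := s + m + n) (k := n) (m := n + m) (by omega)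
  have e3 : s + m + n - n = s + m := by omega
  have e4 : n + m - n = m := by omega
  rw [e3, e4] at this
  rw [add_comm m n, ← this, mul_comm]

theorem pderiv_comm' (f : MvPolynomial (Fin 2) k) :
    pderiv 1 (pderiv 0 f) = pderiv 0 (pderiv 1 f) := by
  have : ⁅(pderiv 1 : Derivation k (MvPolynomial (Fin 2) k) (MvPolynomial (Fin 2) k)),
      (pderiv 0 : Derivation k (MvPolynomial (Fin 2) k) (MvPolynomial (Fin 2) k))⁆ = 0 := by
    apply MvPolynomial.derivation_ext
    intro i
    rw [Derivation.commutator_apply]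
    fin_cases i <;> simp [pderiv_X]
  have h := congrArg (fun D : Derivation k (MvPolynomial (Fin 2) k) (MvPolynomial (Fin 2) k) => D f) this
  simp only [Derivation.commutator_apply] at h
  exact sub_eq_zero.mp h

end basics

section field
variable {K : Type*} [Field K]

theorem bform_inj (n : ℕ) (hn : ∀ m : ℕ, 0 < m → m ≤ n → (m : K) ≠ 0) (a b : ℕ → K)
    (h : bform n a = bform n b) : ∀ i, i ≤ n → a i = b i := by
  induction n generalizing a b with
  | zero =>
    intro i hi
    obtain rfl : i = 0 := by omega
    simpa [bform] using h
  | succ n ih =>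
    have hc : (C ((n + 1 : ℕ) : K) : MvPolynomial (Fin 2) K) ≠ 0 := by
      intro h0
      exact hn (n + 1) (by omega) le_rfl (C_injective (Fin 2) K (h0.trans (map_zero _).symm))
    have h0 := congrArg (pderiv 0) h
    have h1 := congrArg (pderiv 1) h
    rw [pderiv0_bform, pderiv0_bform] at h0
    rw [pderiv1_bform, pderiv1_bform] at h1
    have h0' := ih (fun m hm hm' => hn m hm (by omega)) _ _ (mul_left_cancel₀ hc h0)
    have h1' := ih (fun m hm hm' => hn m hm (by omega)) _ _ (mul_left_cancel₀ hc h1)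
    intro i hi
    rcases i with _ | i
    · exact h0' 0 (by omega)
    · exact h1' i (by omega)

theorem exists_bform (n : ℕ) (hn : ∀ m : ℕ, 0 < m → m ≤ n → (m : K) ≠ 0)
    (f : MvPolynomial (Fin 2) K) (hf : f.IsHomogeneous n) : ∃ a, f = bform n a := by
  induction n generalizing f with
  | zero =>
    refine ⟨fun _ => coeff 0 f, ?_⟩
    rw [bform]
    exact (totalDegree_eq_zero_iff_eq_C.mp (Nat.le_zero.mp hf.totalDegree_le))
  | succ n ih =>
    have hn' : ∀ m : ℕ, 0 < m → m ≤ n → (m : K) ≠ 0 := fun m hm hm' => hn m hm (by omega)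
    obtain ⟨b, hb⟩ := ih hn' (pderiv 0 f) (by simpa using hf.pderiv (i := 0))
    obtain ⟨c, hc⟩ := ih hn' (pderiv 1 f) (by simpa using hf.pderiv (i := 1))
    have hcomm : ∀ i, i + 1 ≤ n → c i = b (i + 1) := by
      rcases n with _ | n
      · intro i hi; omega
      · have e : pderiv 1 (pderiv 0 f) = pderiv 0 (pderiv 1 f) := pderiv_comm' f
        rw [hb, hc, pderiv1_bform, pderiv0_bform] at e
        have hcc : (C ((n + 1 : ℕ) : K) : MvPolynomial (Fin 2) K) ≠ 0 := by
          intro h0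
          exact hn' (n + 1) (by omega) le_rfl (C_injective (Fin 2) K (h0.trans (map_zero _).symm))
        have := bform_inj n (fun m hm hm' => hn m hm (by omega)) _ _ (mul_left_cancel₀ hcc e)
        intro i hi
        exact (this i (by omega)).symm
    have he := hf.sum_X_mul_pderiv
    rw [Fin.sum_univ_two, hb, hc] at he
    have h1 : ((n + 1 : ℕ) : K) ≠ 0 := hn (n + 1) (by omega) le_rfl
    refine ⟨fun i => ((n + 1 : ℕ) : K)⁻¹ * (if i ≤ n then b i else c n), ?_⟩
    rw [bform_smul, bform, bform_congr n _ b (fun i hi => by simp [hi]),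
      bform_congr n (fun i => if i + 1 ≤ n then b (i + 1) else c n) c, he,
      nsmul_eq_mul, ← mul_assoc, ← map_natCast (C : K →+* MvPolynomial (Fin 2) K), ← map_mul,
      inv_mul_cancel₀ h1, map_one, one_mul]
    intro i hi
    by_cases h : i + 1 ≤ n
    · simp [h, hcomm i h]
    · obtain rfl : i = n := by omega
      simp

theorem transvectant_bform (r₁ r₂ h : ℕ) (h1 : h ≤ r₁) (h2 : h ≤ r₂)
    (hf1 : ((r₁.factorial : ℕ) : K) ≠ 0) (hf2 : ((r₂.factorial : ℕ) : K) ≠ 0) (a b : ℕ → K) :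
    transvectant r₁ r₂ h (bform r₁ a) (bform r₂ b) =
      ∑ j ∈ Finset.range (h + 1), C ((-1 : K) ^ j * (h.choose j : K)) *
        (bform (r₁ - h) (fun i => a (i + j)) * bform (r₂ - h) (fun i => b (i + (h - j)))) := by
  rw [transvectant, Finset.mul_sum]
  apply Finset.sum_congr rfl
  intro j hj
  have hj' : j ≤ h := by have := Finset.mem_range.mp hj; omega
  rw [dXdZ_bform r₁ (h - j) j a (by omega), dXdZ_bform r₂ j (h - j) b (by omega)]
  have e1 : h - j + j = h := by omega
  have e2 : j + (h - j) = h := by omega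
  rw [e1, e2]
  have key : (((r₁ - h).factorial * (r₂ - h).factorial : ℕ) : K) /
      (((r₁.factorial * r₂.factorial : ℕ)) : K) * ((r₁.descFactorial h : ℕ) : K) *
        ((r₂.descFactorial h : ℕ) : K) = 1 := by
    rw [← Nat.factorial_mul_descFactorial h1, ← Nat.factorial_mul_descFactorial h2] at *
    push_cast at *
    rw [div_mul_eq_mul_div, div_mul_eq_mul_div, div_eq_one_iff_eq (mul_ne_zero hf1 hf2)]
    ring
  have key2 := congrArg (C : K → MvPolynomial (Fin 2) K) key
  rw [map_mul, map_mul, map_one] at key2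
  linear_combination (C ((-1 : K) ^ j * (h.choose j : K)) *
        (bform (r₁ - h) (fun i => a (i + j)) * bform (r₂ - h) (fun i => b (i + (h - j))))) * key2

end field

section covariance
variable {K : Type*} [Field K]

theorem dX_succ (m : ℕ) (p : MvPolynomial (Fin 2) K) : dX (m + 1) p = dX m (pderiv 0 p) := by
  simp [dX, Function.iterate_succ_apply]

theorem dZ_succ (m : ℕ) (p : MvPolynomial (Fin 2) K) : dZ (m + 1) p = dZ m (pderiv 1 p) := by
  simp [dZ, Function.iterate_succ_apply]

theorem dZ_pderiv0 (m : ℕ) (p : MvPolynomial (Fin 2) K) :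
    dZ m (pderiv 0 p) = pderiv 0 (dZ m p) := by
  induction m generalizing p with
  | zero => simp [dZ]
  | succ m ih => rw [dZ_succ, dZ_succ, pderiv_comm', ih]

/-- Recursive form of the omega process of Cayley. -/
noncomputable def omega : ℕ → MvPolynomial (Fin 2) K → MvPolynomial (Fin 2) K →
    MvPolynomial (Fin 2) K
  | 0, f, g => f * g
  | (h + 1), f, g => omega h (pderiv 0 f) (pderiv 1 g) - omega h (pderiv 1 f) (pderiv 0 g)

theorem omega_eq (h : ℕ) (f g : MvPolynomial (Fin 2) K) :
    omega h f g = ∑ ji ∈ Finset.HasAntidiagonal.antidiagonal h, (h.choose ji.1 : MvPolynomial (Fin 2) K) *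
      ((-1) ^ ji.1 * (dX ji.2 (dZ ji.1 f) * dX ji.1 (dZ ji.2 g))) := by
  induction h generalizing f g with
  | zero => simp [omega, dX, dZ]
  | succ h ih =>
    rw [Finset.sum_antidiagonal_choose_succ_mul
      (fun j i => (-1) ^ j * (dX i (dZ j f) * dX j (dZ i g))), omega, ih, ih, sub_eq_add_neg,
      ← Finset.sum_neg_distrib]
    refine congrArg₂ (· + ·) ?_ ?_
    · apply Finset.sum_congr rfl
      rintro ⟨j, i⟩ _
      simp only [dX_succ, dZ_succ, dZ_pderiv0]
    · apply Finset.sum_congr rfl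
      rintro ⟨j, i⟩ hij
      rw [← Nat.choose_symm_of_eq_add (Finset.HasAntidiagonal.mem_antidiagonal.mp hij).symm]
      simp only [dX_succ, dZ_succ, dZ_pderiv0, pow_succ]
      ring

theorem transvectant_eq_omega (r₁ r₂ h : ℕ) (f g : MvPolynomial (Fin 2) K) :
    transvectant r₁ r₂ h f g = C ((((r₁ - h).factorial * (r₂ - h).factorial : ℕ) : K) /
      (((r₁.factorial * r₂.factorial : ℕ)) : K)) * omega h f g := by
  rw [transvectant, omega_eq, Finset.Nat.sum_antidiagonal_eq_sum_range_succ_mk]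
  congr 1
  apply Finset.sum_congr rfl
  intro j _
  simp only [map_mul, map_pow, map_neg, map_one, map_natCast]
  ring

theorem omega_add_left (h : ℕ) (f f' g : MvPolynomial (Fin 2) K) :
    omega h (f + f') g = omega h f g + omega h f' g := by
  induction h generalizing f f' g with
  | zero => simp [omega, add_mul]
  | succ h ih => simp only [omega, map_add, ih]; ring

theorem omega_add_right (h : ℕ) (f g g' : MvPolynomial (Fin 2) K) :
    omega h f (g + g') = omega h f g + omega h f g' := by
  induction h generalizing f g g' with
  | zero => simp [omega, mul_add]
  | succ h ih => simp only [omega, map_add, ih]; ring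

theorem omega_C_left (h : ℕ) (c : K) (f g : MvPolynomial (Fin 2) K) :
    omega h (C c * f) g = C c * omega h f g := by
  induction h generalizing f g with
  | zero => simp [omega, mul_assoc]
  | succ h ih => simp only [omega, pderiv_C_mul, ih]; ring

theorem omega_C_right (h : ℕ) (c : K) (f g : MvPolynomial (Fin 2) K) :
    omega h f (C c * g) = C c * omega h f g := by
  induction h generalizing f g with
  | zero => simp only [omega]; ring
  | succ h ih => simp only [omega, pderiv_C_mul, ih]; ring

/-- Linear substitution by a matrix. -/
noncomputable def lsub (M : Matrix (Fin 2) (Fin 2) K) :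
    MvPolynomial (Fin 2) K →ₐ[K] MvPolynomial (Fin 2) K :=
  bind₁ (fun j : Fin 2 => C (M j 0) * X 0 + C (M j 1) * X 1)

theorem lsub_C (M : Matrix (Fin 2) (Fin 2) K) (c : K) : lsub M (C c) = C c := by
  simp [lsub]

theorem lsub_X (M : Matrix (Fin 2) (Fin 2) K) (j : Fin 2) :
    lsub M (X j) = C (M j 0) * X 0 + C (M j 1) * X 1 := by
  simp [lsub]

theorem lsub_lsub (M N : Matrix (Fin 2) (Fin 2) K) (f : MvPolynomial (Fin 2) K) :
    lsub M (lsub N f) = lsub (N * M) f := by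
  have : (lsub M).comp (lsub N) = lsub (N * M) := by
    apply MvPolynomial.algHom_ext
    intro i
    simp only [AlgHom.comp_apply, lsub_X, map_add, map_mul, lsub_C, Matrix.mul_apply,
      Fin.sum_univ_two]
    ring
  exact congrArg (fun p => p f) this

theorem lsub_one (f : MvPolynomial (Fin 2) K) : lsub 1 f = f := by
  have : lsub (1 : Matrix (Fin 2) (Fin 2) K) = AlgHom.id K _ := by
    apply MvPolynomial.algHom_ext
    intro i
    fin_cases i <;> simp [lsub_X]
  rw [this]; rfl

theorem constantCoeff_lsub (M : Matrix (Fin 2) (Fin 2) K) (f : MvPolynomial (Fin 2) K) :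
    constantCoeff (lsub M f) = constantCoeff f := by
  induction f using MvPolynomial.induction_on with
  | C a => simp
  | add p q hp hq => simp [hp, hq]
  | mul_X p i hp => simp [lsub_X]

theorem pderiv_lsub (M : Matrix (Fin 2) (Fin 2) K) (l : Fin 2) (f : MvPolynomial (Fin 2) K) :
    pderiv l (lsub M f) =
      C (M 0 l) * lsub M (pderiv 0 f) + C (M 1 l) * lsub M (pderiv 1 f) := by
  induction f using MvPolynomial.induction_on with
  | C a => simp
  | add p q hp hq => simp only [map_add, hp, hq]; ring
  | mul_X p i hp =>
    simp only [map_mul, Derivation.leibniz, hp, lsub_X, map_add, smul_eq_mul, pderiv_C]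
    fin_cases i <;> fin_cases l <;> simp [pderiv_X] <;> ring

theorem omega_lsub (M : Matrix (Fin 2) (Fin 2) K) (h : ℕ) (f g : MvPolynomial (Fin 2) K) :
    omega h (lsub M f) (lsub M g) = C (M.det ^ h) * lsub M (omega h f g) := by
  induction h generalizing f g with
  | zero => simp [omega]
  | succ h ih =>
    simp only [omega, pderiv_lsub, omega_add_left, omega_add_right, omega_C_left, omega_C_right,
      ih, map_sub, pow_succ, Matrix.det_fin_two, map_mul]
    ring

theorem transvectant_lsub (M : Matrix (Fin 2) (Fin 2) K) (r₁ r₂ h : ℕ)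
    (f g : MvPolynomial (Fin 2) K) :
    transvectant r₁ r₂ h (lsub M f) (lsub M g) =
      C (M.det ^ h) * lsub M (transvectant r₁ r₂ h f g) := by
  simp only [transvectant_eq_omega, omega_lsub, map_mul, lsub_C]
  ring

theorem transvectant_C_left (r₁ r₂ h : ℕ) (c : K) (f g : MvPolynomial (Fin 2) K) :
    transvectant r₁ r₂ h (C c * f) g = C c * transvectant r₁ r₂ h f g := by
  simp only [transvectant_eq_omega, omega_C_left]
  ring

theorem transvectant_C_right (r₁ r₂ h : ℕ) (c : K) (f g : MvPolynomial (Fin 2) K) :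
    transvectant r₁ r₂ h f (C c * g) = C c * transvectant r₁ r₂ h f g := by
  simp only [transvectant_eq_omega, omega_C_right]
  ring

theorem covG_lsub (M : Matrix (Fin 2) (Fin 2) K) (f : MvPolynomial (Fin 2) K) :
    covG (lsub M f) = C (M.det ^ 4) * lsub M (covG f) := by
  simp only [covG, transvectant_lsub]

theorem covK_lsub (M : Matrix (Fin 2) (Fin 2) K) (f : MvPolynomial (Fin 2) K) :
    covK (lsub M f) = C (M.det ^ 6) * lsub M (covK f) := by
  simp only [covK, transvectant_lsub]

theorem covH_lsub (M : Matrix (Fin 2) (Fin 2) K) (f : MvPolynomial (Fin 2) K) :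
    covH (lsub M f) = C (M.det ^ 14) * lsub M (covH f) := by
  simp only [covH, covK_lsub, transvectant_C_left, transvectant_C_right, transvectant_lsub]
  simp only [map_pow]
  ring

theorem covM_lsub (M : Matrix (Fin 2) (Fin 2) K) (f : MvPolynomial (Fin 2) K) :
    covM (lsub M f) = C (M.det ^ 10) * lsub M (covM f) := by
  simp only [covM, covK_lsub, transvectant_C_left, transvectant_C_right, transvectant_lsub]
  simp only [map_pow]
  ring

theorem covN_lsub (M : Matrix (Fin 2) (Fin 2) K) (f : MvPolynomial (Fin 2) K) :
    covN (lsub M f) = C (M.det ^ 18) * lsub M (covN f) := by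
  simp only [covN, covH_lsub, transvectant_C_left, transvectant_C_right, transvectant_lsub]
  simp only [map_pow]
  ring

theorem covP_lsub (M : Matrix (Fin 2) (Fin 2) K) (f : MvPolynomial (Fin 2) K) :
    covP (lsub M f) = C (M.det ^ 14) * lsub M (covP f) := by
  simp only [covP, covG_lsub, covK_lsub, transvectant_C_left, transvectant_C_right,
    transvectant_lsub]
  simp only [map_pow]
  ring

theorem covQ_lsub (M : Matrix (Fin 2) (Fin 2) K) (f : MvPolynomial (Fin 2) K) :
    covQ (lsub M f) = C (M.det ^ 22) * lsub M (covQ f) := by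
  simp only [covQ, covG_lsub, covH_lsub, transvectant_C_left, transvectant_C_right,
    transvectant_lsub]
  simp only [map_pow]
  ring

/-- All the invariants transform by a power of the determinant. -/
theorem shJ_lsub (M : Matrix (Fin 2) (Fin 2) K) (f : MvPolynomial (Fin 2) K) :
    shJ2 (lsub M f) = M.det ^ 8 * shJ2 f ∧ shJ3 (lsub M f) = M.det ^ 12 * shJ3 f ∧
    shJ4 (lsub M f) = M.det ^ 16 * shJ4 f ∧ shJ5 (lsub M f) = M.det ^ 20 * shJ5 f ∧
    shJ6 (lsub M f) = M.det ^ 24 * shJ6 f ∧ shJ7 (lsub M f) = M.det ^ 28 * shJ7 f ∧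
    shJ8 (lsub M f) = M.det ^ 32 * shJ8 f ∧ shJ9 (lsub M f) = M.det ^ 36 * shJ9 f ∧
    shJ10 (lsub M f) = M.det ^ 40 * shJ10 f := by
  refine ⟨?_, ?_, ?_, ?_, ?_, ?_, ?_, ?_, ?_⟩ <;>
  simp only [shJ2, shJ3, shJ4, shJ5, shJ6, shJ7, shJ8, shJ9, shJ10, covG_lsub, covK_lsub,
    covH_lsub, covM_lsub, covN_lsub, covP_lsub, covQ_lsub, transvectant_C_left,
    transvectant_C_right, transvectant_lsub, map_mul, constantCoeff_lsub, constantCoeff_C] <;>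
  ring

end covariance

set_option linter.unusedSimpArgs false

section normal
variable {K : Type*} [Field K]

theorem C_ofNat' (n : ℕ) [n.AtLeastTwo] :
    (C (ofNat(n) : K) : MvPolynomial (Fin 2) K) = ofNat(n) := map_ofNat C n

theorem cc_ofNat' (n : ℕ) [n.AtLeastTwo] :
    constantCoeff (ofNat(n) : MvPolynomial (Fin 2) K) = ofNat(n) :=
  map_ofNat constantCoeff n

/-- Small positive integers are invertible. -/
def Good (K : Type*) [Field K] : Prop := ∀ m : ℕ, 0 < m → m ≤ 8 → (m : K) ≠ 0

theorem good_of_char (hchar : ringChar K = 0 ∨ 11 ≤ ringChar K) : Good K := by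
  intro m h0 h8 h
  have hd := (ringChar.spec K m).mp h
  rcases hchar with hc | hc
  · rw [hc, zero_dvd_iff] at hd; omega
  · have := Nat.le_of_dvd h0 hd; omega

theorem Good.fact {n : ℕ} (hK : Good K) (hn : n ≤ 8) : ((n.factorial : ℕ) : K) ≠ 0 := by
  induction n with
  | zero => simp
  | succ n ih =>
    rw [Nat.factorial_succ, Nat.cast_mul]
    exact mul_ne_zero (hK _ (by omega) hn) (ih (by omega))

theorem Good.two (hK : Good K) : (2 : K) ≠ 0 := by exact_mod_cast hK 2 (by omega) (by omega)
theorem Good.three (hK : Good K) : (3 : K) ≠ 0 := by exact_mod_cast hK 3 (by omega) (by omega)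
theorem Good.five (hK : Good K) : (5 : K) ≠ 0 := by exact_mod_cast hK 5 (by omega) (by omega)
theorem Good.seven (hK : Good K) : (7 : K) ≠ 0 := by exact_mod_cast hK 7 (by omega) (by omega)

theorem bform_inj4 (hK : Good K) {a b : ℕ → K} (h : bform 4 a = bform 4 b) :
    ∀ i, i ≤ 4 → a i = b i :=
  bform_inj 4 (fun m hm hm' => hK m hm (by omega)) a b h

theorem bform_inj8 (hK : Good K) {a b : ℕ → K} (h : bform 8 a = bform 8 b) :
    ∀ i, i ≤ 8 → a i = b i :=
  bform_inj 8 hK a b h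

theorem eval01_bform (n : ℕ) (a : ℕ → K) : eval ![0, 1] (bform n a) = a n := by
  induction n generalizing a with
  | zero => simp [bform]
  | succ n ih => simp [bform, ih]

theorem eval10_bform (n : ℕ) (a : ℕ → K) : eval ![1, 0] (bform n a) = a 0 := by
  induction n generalizing a with
  | zero => simp [bform]
  | succ n ih => simp [bform, ih]

theorem tv444 (hK : Good K) (a b : ℕ → K) :
    constantCoeff (transvectant 4 4 4 (bform 4 a) (bform 4 b)) =
      a 0 * b 4 - 4 * a 1 * b 3 + 6 * a 2 * b 2 - 4 * a 3 * b 1 + a 4 * b 0 := by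
  rw [transvectant_bform 4 4 4 le_rfl le_rfl (hK.fact (by omega)) (hK.fact (by omega))]
  simp [Finset.sum_range_succ, bform, Nat.choose, C_ofNat', cc_ofNat']
  ring

theorem tv844 (hK : Good K) (a b : ℕ → K) :
    transvectant 8 4 4 (bform 8 a) (bform 4 b) =
      bform 4 (fun i => a i * b 4 - 4 * a (i + 1) * b 3 + 6 * a (i + 2) * b 2
        - 4 * a (i + 3) * b 1 + a (i + 4) * b 0) := by
  rw [transvectant_bform 8 4 4 (by omega) le_rfl (hK.fact (by omega)) (hK.fact (by omega))]
  simp [Finset.sum_range_succ, bform, Nat.choose, C_ofNat', cc_ofNat']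
  ring

theorem shJ2_bform (hK : Good K) (a : ℕ → K) : shJ2 (bform 8 a) =
    2 * (a 0 * a 8 - 8 * a 1 * a 7 + 28 * a 2 * a 6 - 56 * a 3 * a 5 + 35 * a 4 ^ 2) := by
  rw [shJ2, transvectant_bform 8 8 8 le_rfl le_rfl (hK.fact (by omega)) (hK.fact (by omega))]
  simp [Finset.sum_range_succ, bform, Nat.choose, C_ofNat', cc_ofNat']
  ring

theorem covK_bform (hK : Good K) (a k : ℕ → K)
    (h0 : k 0 = 2 * a 0 * a 6 - 12 * a 1 * a 5 + 30 * a 2 * a 4 - 20 * a 3 ^ 2)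
    (h1 : k 1 = a 0 * a 7 - 5 * a 1 * a 6 + 9 * a 2 * a 5 - 5 * a 3 * a 4)
    (h2 : 3 * k 2 = a 0 * a 8 - 2 * a 1 * a 7 - 8 * a 2 * a 6 + 34 * a 3 * a 5 - 25 * a 4 ^ 2)
    (h3 : k 3 = a 1 * a 8 - 5 * a 2 * a 7 + 9 * a 3 * a 6 - 5 * a 4 * a 5)
    (h4 : k 4 = 2 * a 2 * a 8 - 12 * a 3 * a 7 + 30 * a 4 * a 6 - 20 * a 5 ^ 2) :
    covK (bform 8 a) = bform 4 k := by
  rw [covK, transvectant_bform 8 8 6 (by omega) (by omega) (hK.fact le_rfl) (hK.fact le_rfl)]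
  have h2' := congrArg (C : K → MvPolynomial (Fin 2) K) h2
  simp [Finset.sum_range_succ, bform, Nat.choose, C_ofNat', cc_ofNat', h0, h1, h3, h4] at h2' ⊢
  linear_combination (-2) * X 0 ^ 2 * X 1 ^ 2 * h2'

theorem covH_bform (hK : Good K) (k h : ℕ → K)
    (h0 : h 0 = 2 * (k 0 * k 2 - k 1 ^ 2))
    (h1 : h 1 = k 0 * k 3 - k 1 * k 2)
    (h2 : 3 * h 2 = k 0 * k 4 + 2 * k 1 * k 3 - 3 * k 2 ^ 2)
    (h3 : h 3 = k 1 * k 4 - k 2 * k 3)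
    (h4 : h 4 = 2 * (k 2 * k 4 - k 3 ^ 2)) :
    transvectant 4 4 2 (bform 4 k) (bform 4 k) = bform 4 h := by
  rw [transvectant_bform 4 4 2 (by omega) (by omega) (hK.fact (by omega)) (hK.fact (by omega))]
  have h2' := congrArg (C : K → MvPolynomial (Fin 2) K) h2
  simp [Finset.sum_range_succ, bform, Nat.choose, C_ofNat', cc_ofNat', h0, h1, h3, h4] at h2' ⊢
  linear_combination (-2) * X 0 ^ 2 * X 1 ^ 2 * h2'

theorem covK_coeffs (hK : Good K) (a k : ℕ → K) (h : covK (bform 8 a) = bform 4 k) :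
    k 0 = 2 * a 0 * a 6 - 12 * a 1 * a 5 + 30 * a 2 * a 4 - 20 * a 3 ^ 2 ∧
    k 1 = a 0 * a 7 - 5 * a 1 * a 6 + 9 * a 2 * a 5 - 5 * a 3 * a 4 ∧
    3 * k 2 = a 0 * a 8 - 2 * a 1 * a 7 - 8 * a 2 * a 6 + 34 * a 3 * a 5 - 25 * a 4 ^ 2 ∧
    k 3 = a 1 * a 8 - 5 * a 2 * a 7 + 9 * a 3 * a 6 - 5 * a 4 * a 5 ∧
    k 4 = 2 * a 2 * a 8 - 12 * a 3 * a 7 + 30 * a 4 * a 6 - 20 * a 5 ^ 2 := by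
  let k' : ℕ → K := fun i => match i with
    | 0 => 2 * a 0 * a 6 - 12 * a 1 * a 5 + 30 * a 2 * a 4 - 20 * a 3 ^ 2
    | 1 => a 0 * a 7 - 5 * a 1 * a 6 + 9 * a 2 * a 5 - 5 * a 3 * a 4
    | 2 => (a 0 * a 8 - 2 * a 1 * a 7 - 8 * a 2 * a 6 + 34 * a 3 * a 5 - 25 * a 4 ^ 2) / 3
    | 3 => a 1 * a 8 - 5 * a 2 * a 7 + 9 * a 3 * a 6 - 5 * a 4 * a 5
    | _ => 2 * a 2 * a 8 - 12 * a 3 * a 7 + 30 * a 4 * a 6 - 20 * a 5 ^ 2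
  have e2 : 3 * k' 2 =
      a 0 * a 8 - 2 * a 1 * a 7 - 8 * a 2 * a 6 + 34 * a 3 * a 5 - 25 * a 4 ^ 2 :=
    mul_div_cancel₀ _ hK.three
  have e := bform_inj4 hK (h.symm.trans (covK_bform hK a k' rfl rfl e2 rfl rfl))
  exact ⟨e 0 (by omega), e 1 (by omega), by rw [e 2 (by omega), e2], e 3 (by omega),
    e 4 (by omega)⟩

theorem exists_covK (hK : Good K) (a : ℕ → K) : ∃ k, covK (bform 8 a) = bform 4 k := by
  refine ⟨fun i => match i with
    | 0 => 2 * a 0 * a 6 - 12 * a 1 * a 5 + 30 * a 2 * a 4 - 20 * a 3 ^ 2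
    | 1 => a 0 * a 7 - 5 * a 1 * a 6 + 9 * a 2 * a 5 - 5 * a 3 * a 4
    | 2 => (a 0 * a 8 - 2 * a 1 * a 7 - 8 * a 2 * a 6 + 34 * a 3 * a 5 - 25 * a 4 ^ 2) / 3
    | 3 => a 1 * a 8 - 5 * a 2 * a 7 + 9 * a 3 * a 6 - 5 * a 4 * a 5
    | _ => 2 * a 2 * a 8 - 12 * a 3 * a 7 + 30 * a 4 * a 6 - 20 * a 5 ^ 2,
    covK_bform hK a _ rfl rfl (mul_div_cancel₀ _ hK.three) rfl rfl⟩

theorem shJ46 (hK : Good K) (a k : ℕ → K) (h : covK (bform 8 a) = bform 4 k) :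
    shJ4 (bform 8 a) = 2 * (k 0 * k 4 - 4 * k 1 * k 3 + 3 * k 2 ^ 2) ∧
    shJ6 (bform 8 a) = 6 * (k 0 * k 2 * k 4 + 2 * k 1 * k 2 * k 3 - k 2 ^ 3 - k 0 * k 3 ^ 2
      - k 1 ^ 2 * k 4) := by
  constructor
  · rw [shJ4, h, tv444 hK]; ring
  · rw [shJ6, covH, h]
    have e2 : 3 * ((k 0 * k 4 + 2 * k 1 * k 3 - 3 * k 2 ^ 2) / 3) =
      k 0 * k 4 + 2 * k 1 * k 3 - 3 * k 2 ^ 2 := mul_div_cancel₀ _ hK.three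
    rw [covH_bform hK k (fun i => match i with
      | 0 => 2 * (k 0 * k 2 - k 1 ^ 2)
      | 1 => k 0 * k 3 - k 1 * k 2
      | 2 => (k 0 * k 4 + 2 * k 1 * k 3 - 3 * k 2 ^ 2) / 3
      | 3 => k 1 * k 4 - k 2 * k 3
      | _ => 2 * (k 2 * k 4 - k 3 ^ 2)) rfl rfl e2 rfl rfl, tv444 hK]
    simp only
    linear_combination 2 * k 2 * e2

theorem exists_covG (hK : Good K) (a : ℕ → K) : ∃ g, covG (bform 8 a) = bform 8 g ∧
    g 8 = 2 * (a 4 * a 8 - 4 * a 5 * a 7 + 3 * a 6 ^ 2) ∧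
    g 7 = a 3 * a 8 - 3 * a 4 * a 7 + 2 * a 5 * a 6 := by
  have e := transvectant_bform 8 8 4 (by omega) (by omega) (hK.fact le_rfl) (hK.fact le_rfl) a a
  have hom : (covG (bform 8 a)).IsHomogeneous 8 := by
    rw [covG, e]
    apply IsHomogeneous.sum
    intro j _
    exact (((bform_homog 4 _).mul (bform_homog 4 _)).C_mul _)
  obtain ⟨g, hg⟩ := exists_bform 8 hK _ hom
  refine ⟨g, hg, ?_, ?_⟩
  · rw [← eval01_bform 8 g, ← hg, covG, e]
    simp only [Finset.sum_range_succ, Finset.sum_range_zero, map_add, map_mul, eval_C,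
      eval01_bform, Nat.choose, C_ofNat', cc_ofNat']
    norm_num
    ring
  · have h1 := congrArg (eval ![0, 1]) (pderiv0_bform 7 g)
    rw [← hg, covG, e] at h1
    simp only [Finset.sum_range_succ, Finset.sum_range_zero, map_add, map_mul, eval_C,
      eval01_bform, Nat.choose, C_ofNat', cc_ofNat', Derivation.leibniz, smul_eq_mul,
      show 8 - 4 = 3 + 1 from rfl, pderiv0_bform] at h1
    norm_num at h1
    have h8 : (8 : K) ≠ 0 := by exact_mod_cast hK 8 (by omega) (by omega)
    apply mul_left_cancel₀ h8
    rw [← h1]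
    ring

end normal

section main
variable {K : Type*} [Field K]

/-- The hypotheses on the octic: the relations of the stratum and squarefreeness. -/
def Hyp (f : MvPolynomial (Fin 2) K) : Prop :=
  Squarefree f ∧ shJ2 f = 0 ∧ shJ3 f = 0 ∧ shJ4 f = 0 ∧ shJ5 f = 0 ∧ shJ6 f = 0 ∧
        shJ8 f = 0 ∧ shJ9 f = 0 ∧ shJ10 f = 0

/-- The conclusion of the forward direction. -/
def Concl (f : MvPolynomial (Fin 2) K) : Prop :=
  shJ7 f ≠ 0 ∧ ∃ M : Matrix (Fin 2) (Fin 2) K, IsUnit M.det ∧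
        f = lsub M (X 0 ^ 7 * X 1 - X 1 ^ 8)

theorem lsub_inv_cancel (M : Matrix (Fin 2) (Fin 2) K) (hM : IsUnit M.det)
    (f : MvPolynomial (Fin 2) K) : lsub M⁻¹ (lsub M f) = f ∧ lsub M (lsub M⁻¹ f) = f := by
  rw [lsub_lsub, lsub_lsub, Matrix.mul_nonsing_inv M hM, Matrix.nonsing_inv_mul M hM, lsub_one]
  exact ⟨rfl, rfl⟩

theorem Hyp.lsub {f : MvPolynomial (Fin 2) K} (hf : Hyp f) (M : Matrix (Fin 2) (Fin 2) K)
    (hM : IsUnit M.det) : Hyp (lsub M f) := by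
  obtain ⟨hs, h2, h3, h4, h5, h6, h8, h9, h10⟩ := hf
  obtain ⟨e2, e3, e4, e5, e6, e7, e8, e9, e10⟩ := shJ_lsub M f
  refine ⟨?_, by rw [e2, h2, mul_zero], by rw [e3, h3, mul_zero], by rw [e4, h4, mul_zero],
    by rw [e5, h5, mul_zero], by rw [e6, h6, mul_zero], by rw [e8, h8, mul_zero],
    by rw [e9, h9, mul_zero], by rw [e10, h10, mul_zero]⟩
  intro p hp
  have h := hs (Octic.lsub M⁻¹ p) (by
    have := map_dvd (Octic.lsub M⁻¹) hp
    rwa [map_mul, (lsub_inv_cancel M hM f).1] at this)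
  have h' := h.map (Octic.lsub M)
  rwa [(lsub_inv_cancel M hM p).2] at h'

theorem Concl.of_lsub {f : MvPolynomial (Fin 2) K} (M : Matrix (Fin 2) (Fin 2) K)
    (hM : IsUnit M.det) (hf : Concl (lsub M f)) : Concl f := by
  obtain ⟨h7, N, hN, e⟩ := hf
  constructor
  · intro h
    apply h7
    rw [(shJ_lsub M f).2.2.2.2.2.1, h, mul_zero]
  · refine ⟨N * M⁻¹, ?_, ?_⟩
    · rw [Matrix.det_mul]
      exact hN.mul (Matrix.isUnit_nonsing_inv_det M hM)
    · rw [← lsub_lsub, ← e, (lsub_inv_cancel M hM f).1]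

theorem lsub_bform_homog (M : Matrix (Fin 2) (Fin 2) K) (n : ℕ) (a : ℕ → K) :
    (lsub M (bform n a)).IsHomogeneous n := by
  induction n generalizing a with
  | zero => rw [bform, lsub_C]; exact isHomogeneous_C _ _
  | succ n ih =>
    rw [bform, add_comm n 1, map_add, map_mul, map_mul, lsub_X, lsub_X]
    have hl : ∀ c d : K, (C c * X 0 + C d * X 1 : MvPolynomial (Fin 2) K).IsHomogeneous 1 :=
      fun c d => ((isHomogeneous_X K _).C_mul c).add ((isHomogeneous_X K _).C_mul d)
    exact ((hl _ _).mul (ih _)).add ((hl _ _).mul (ih _))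

/-- Transport of the whole situation along a linear substitution. -/
theorem transport (hK : Good K) (a k : ℕ → K) (hf : Hyp (bform 8 a))
    (hk : covK (bform 8 a) = bform 4 k) (M : Matrix (Fin 2) (Fin 2) K) (hM : IsUnit M.det) :
    ∃ a' : ℕ → K, lsub M (bform 8 a) = bform 8 a' ∧ Hyp (bform 8 a') ∧
      covK (bform 8 a') = C (M.det ^ 6) * lsub M (bform 4 k) ∧
      (Concl (bform 8 a') → Concl (bform 8 a)) := by
  obtain ⟨a', ha'⟩ := exists_bform 8 hK _ (lsub_bform_homog M 8 a)
  refine ⟨a', ha', ?_, ?_, ?_⟩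
  · rw [← ha']; exact hf.lsub M hM
  · rw [← ha', covK_lsub, hk]
  · rw [← ha']; exact Concl.of_lsub M hM

theorem not_unit_of_eval {p : MvPolynomial (Fin 2) K} (v : Fin 2 → K) (h : eval v p = 0) :
    ¬ IsUnit p := by
  intro hu
  have := hu.map (eval v)
  rw [h] at this
  exact not_isUnit_zero this

theorem a7_ne_zero {a : ℕ → K} (hf : Hyp (bform 8 a)) (h8 : a 8 = 0) : a 7 ≠ 0 := by
  intro h7
  apply not_unit_of_eval (p := (X 0 : MvPolynomial (Fin 2) K)) ![0, 1] (by simp)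
  apply hf.1
  refine ⟨C (a 0) * X 0 ^ 6 + 8 * C (a 1) * X 0 ^ 5 * X 1 + 28 * C (a 2) * X 0 ^ 4 * X 1 ^ 2
    + 56 * C (a 3) * X 0 ^ 3 * X 1 ^ 3 + 70 * C (a 4) * X 0 ^ 2 * X 1 ^ 4
    + 56 * C (a 5) * X 0 * X 1 ^ 5 + 28 * C (a 6) * X 1 ^ 6, ?_⟩
  simp only [bform, Nat.reduceAdd, h7, h8, map_zero]
  ring

theorem caseA [IsAlgClosed K] (hK : Good K) (a k : ℕ → K) (hf : Hyp (bform 8 a))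
    (hk : covK (bform 8 a) = bform 4 k) (k0 : k 0 = 0) (k1 : k 1 ≠ 0) (k2 : k 2 = 0)
    (k3 : k 3 = 0) (k4 : k 4 = 0) : Concl (bform 8 a) := by
  have hh : covH (bform 8 a) = bform 4 (fun i => if i = 0 then -2 * k 1 ^ 2 else 0) := by
    rw [covH, hk]
    apply covH_bform hK <;> simp [k0, k2, k3, k4]
  obtain ⟨g, hg, hg8, hg7⟩ := exists_covG hK a
  have two := hK.two
  have two16 : (16 : K) ≠ 0 := by
    have : (16 : K) = 2 ^ 4 := by norm_num
    rw [this]; exact pow_ne_zero _ two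
  have two8 : (8 : K) ≠ 0 := by
    have : (8 : K) = 2 ^ 3 := by norm_num
    rw [this]; exact pow_ne_zero _ two
  have e5 : shJ5 (bform 8 a) = 16 * k 1 ^ 2 * a 6 := by
    rw [shJ5, covM, hk, tv844 hK, tv444 hK]
    simp [k0, k2, k3, k4]; ring
  have e7 : shJ7 (bform 8 a) = 8 * k 1 ^ 3 * a 7 := by
    rw [shJ7, covM, hh, hk, tv844 hK, tv444 hK]
    simp [k0, k2, k3, k4]; ring
  have e8 : shJ8 (bform 8 a) = 8 * k 1 ^ 3 * g 7 := by
    rw [shJ8, covP, hh, hk, hg, tv844 hK, tv444 hK]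
    simp [k0, k2, k3, k4]; ring
  have e9 : shJ9 (bform 8 a) = 4 * k 1 ^ 4 * a 8 := by
    rw [shJ9, covN, hh, tv844 hK, tv444 hK]
    simp; ring
  have e10 : shJ10 (bform 8 a) = 4 * k 1 ^ 4 * g 8 := by
    rw [shJ10, covQ, hh, hg, tv844 hK, tv444 hK]
    simp; ring
  have e2 := shJ2_bform hK a
  have hf' := hf
  obtain ⟨hs, h2, h3, h4, h5, h6, h8, h9, h10⟩ := hf'
  have two4 : (4 : K) ≠ 0 := by
    have : (4 : K) = 2 ^ 2 := by norm_num
    rw [this]; exact pow_ne_zero _ two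
  have a8 : a 8 = 0 := by
    rw [h9] at e9
    simpa [two4, k1] using e9.symm
  have a6 : a 6 = 0 := by
    rw [h5] at e5
    simpa [two16, k1] using e5.symm
  have g7 : g 7 = 0 := by
    rw [h8] at e8
    simpa [two8, k1] using e8.symm
  have g8 : g 8 = 0 := by
    rw [h10] at e10
    simpa [two4, k1] using e10.symm
  have a7 := a7_ne_zero hf a8
  have a5 : a 5 = 0 := by
    rw [g8, a8, a6] at hg8
    have : 8 * (a 5 * a 7) = 0 := by linear_combination hg8
    simpa [two8, a7] using this
  have a4 : a 4 = 0 := by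
    rw [g7, a8, a6] at hg7
    have : 3 * (a 4 * a 7) = 0 := by linear_combination hg7
    simpa [hK.three, a7] using this
  have a1 : a 1 = 0 := by
    rw [h2, a8, a6, a5, a4] at e2
    have : 16 * (a 1 * a 7) = 0 := by linear_combination e2
    simpa [two16, a7] using this
  obtain ⟨-, c1, -, c3, c4⟩ := covK_coeffs hK a k hk
  have a3 : a 3 = 0 := by
    rw [k4, a8, a6, a5] at c4
    have : 2 * (2 * (3 * (a 3 * a 7))) = 0 := by linear_combination c4
    simpa [two, hK.three, a7] using this
  have a2 : a 2 = 0 := by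
    rw [k3, a8, a6, a5] at c3
    have : 5 * (a 2 * a 7) = 0 := by linear_combination c3
    simpa [hK.five, a7] using this
  have a0 : a 0 ≠ 0 := by
    intro h
    apply k1
    rw [c1, h, a1, a2, a3]; ring
  refine ⟨by rw [e7]; exact mul_ne_zero (mul_ne_zero two8 (pow_ne_zero _ k1)) a7, ?_⟩
  obtain ⟨s, hs8⟩ := IsAlgClosed.exists_pow_nat_eq (-a 0) (n := 8) (by omega)
  have s0 : s ≠ 0 := by
    rintro rfl
    apply a0
    have := hs8.symm
    simpa using this
  obtain ⟨t, ht7⟩ := IsAlgClosed.exists_pow_nat_eq (8 * a 7 / s) (n := 7) (by omega)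
  have t0 : t ≠ 0 := by
    rintro rfl
    have := ht7.symm
    simp [two8, a7, s0] at this
  refine ⟨!![0, t; s, 0], ?_, ?_⟩
  · rw [Matrix.det_fin_two]
    simp [s0, t0]
  · have hts : t ^ 7 * s = 8 * a 7 := by rw [ht7]; field_simp
    have c1 := congrArg (C : K → MvPolynomial (Fin 2) K) hts
    have c2 := congrArg (C : K → MvPolynomial (Fin 2) K) hs8
    simp only [map_sub, map_mul, map_pow, lsub_X]
    simp [C_ofNat'] at c1 c2
    simp [bform, a1, a2, a3, a4, a5, a6, a8]
    linear_combination (-X 0 * X 1 ^ 7) * c1 + X 0 ^ 8 * c2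

theorem caseB (hK : Good K) (a k : ℕ → K) (hf : Hyp (bform 8 a))
    (hk : covK (bform 8 a) = bform 4 k) (k1 : k 1 = 0) (k2 : k 2 = 0)
    (k3 : k 3 = 0) (k4 : k 4 = 0) (a8 : a 8 = 0) (a6 : a 6 = 0) : False := by
  have a7 := a7_ne_zero hf a8
  have e2 := shJ2_bform hK a
  have hf' := hf
  obtain ⟨hs, h2, -⟩ := hf'
  obtain ⟨-, c1, c2, c3, c4⟩ := covK_coeffs hK a k hk
  rw [h2, a8, a6] at e2
  rw [k1, a6] at c1
  rw [k2, a8, a6] at c2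
  rw [k3, a8, a6] at c3
  rw [k4, a8, a6] at c4
  have two := hK.two
  have three := hK.three
  have five := hK.five
  generalize hw : a 7 = w at *
  have d3 : 3 * (a 3 * w) = -5 * a 5 ^ 2 := by
    have : 2 * (2 * (3 * (a 3 * w) + 5 * a 5 ^ 2)) = 0 := by linear_combination c4
    have := (mul_eq_zero.mp ((mul_eq_zero.mp this).resolve_left two)).resolve_left two
    linear_combination this
  have d2 : a 2 * w = - a 4 * a 5 := by
    have : 5 * (a 2 * w + a 4 * a 5) = 0 := by linear_combination c3
    have := (mul_eq_zero.mp this).resolve_left five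
    linear_combination this
  have d1 : 2 * a 1 * w = 34 * a 3 * a 5 - 25 * a 4 ^ 2 := by linear_combination c2
  have d45 : 64 * a 5 ^ 3 = -27 * a 4 ^ 2 * w := by
    have : 2 * (3 * (64 * a 3 * a 5 - 45 * a 4 ^ 2)) = 0 := by
      linear_combination e2 - 8 * d1
    have := (mul_eq_zero.mp ((mul_eq_zero.mp this).resolve_left two)).resolve_left three
    have : 5 * (64 * a 5 ^ 3 + 27 * a 4 ^ 2 * w) = 0 := by
      linear_combination (-3 * w) * this + 64 * a 5 * d3
    have := (mul_eq_zero.mp this).resolve_left five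
    linear_combination this
  obtain ⟨s, hs5, hs4⟩ : ∃ s : K, a 5 = -3 * s ^ 2 * w ∧ a 4 = 8 * s ^ 3 * w := by
    by_cases h5 : a 5 = 0
    · refine ⟨0, by simp [h5], ?_⟩
      rw [h5] at d45
      have : 3 * (3 * (3 * (a 4 ^ 2 * w))) = 0 := by linear_combination d45
      have : a 4 = 0 := by simpa [three, a7] using this
      simp [this]
    · have h4 : a 4 ≠ 0 := by
        intro h
        rw [h] at d45
        have : 2 ^ 6 * a 5 ^ 3 = 0 := by linear_combination d45
        exact (mul_ne_zero (pow_ne_zero 6 two) (pow_ne_zero 3 h5)) this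
      have h8 : (8 : K) ≠ 0 := by
        have : (8 : K) = 2 ^ 3 := by norm_num
        rw [this]; exact pow_ne_zero _ two
      obtain ⟨s, hs⟩ : ∃ s : K, s * (8 * a 5) = -3 * a 4 :=
        ⟨-3 * a 4 / (8 * a 5), by field_simp⟩
      have q5 : a 5 = -3 * s ^ 2 * w := by
        have : (8 * a 5) ^ 2 * (a 5 + 3 * s ^ 2 * w) = 0 := by
          linear_combination d45 + 3 * w * (s * (8 * a 5) - 3 * a 4) * hs
        have := (mul_eq_zero.mp this).resolve_left (pow_ne_zero 2 (mul_ne_zero h8 h5))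
        linear_combination this
      refine ⟨s, q5, ?_⟩
      have : 3 * (a 4 - 8 * s ^ 3 * w) = 0 := by linear_combination hs - 8 * s * q5
      have := (mul_eq_zero.mp this).resolve_left three
      linear_combination this
  have s3 : a 3 = -15 * s ^ 4 * w := by
    have : 3 * (w * (a 3 + 15 * s ^ 4 * w)) = 0 := by
      rw [hs5] at d3; linear_combination d3
    have := (mul_eq_zero.mp ((mul_eq_zero.mp this).resolve_left three)).resolve_left a7
    linear_combination this
  have s2 : a 2 = 24 * s ^ 5 * w := by
    apply mul_right_cancel₀ a7
    rw [d2, hs4, hs5]; ring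
  have s1 : a 1 = -35 * s ^ 6 * w := by
    apply mul_right_cancel₀ a7
    apply mul_left_cancel₀ two
    rw [← mul_assoc, d1, hs4, hs5, s3]; ring
  have s0 : a 0 = 48 * s ^ 7 * w := by
    apply mul_right_cancel₀ a7
    rw [s2, s3, hs4, hs5] at c1
    linear_combination -c1
  apply not_unit_of_eval (p := (C s * X 0 - X 1 : MvPolynomial (Fin 2) K)) ![1, s] (by simp)
  apply hs
  refine ⟨8 * C w * X 0 * (C s * X 0 - X 1) ^ 4 * (6 * C s * X 0 + X 1), ?_⟩
  simp [bform, s0, s1, s2, s3, hs4, hs5, a6, hw, a8, C_ofNat']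
  ring

theorem lsub_shift4 (c : K) (a : ℕ → K) : lsub !![1, 0; c, 1] (bform 4 a) =
    bform 4 (fun i => ∑ j ∈ Finset.range (5 - i), (4 - i).choose j * c ^ j * a (i + j)) := by
  simp [bform, lsub_X, lsub_C, Finset.sum_range_succ, Nat.choose, C_ofNat']
  ring

theorem lsub_shift8 (c : K) (a : ℕ → K) : lsub !![1, 0; c, 1] (bform 8 a) =
    bform 8 (fun i => ∑ j ∈ Finset.range (9 - i), (8 - i).choose j * c ^ j * a (i + j)) := by
  simp [bform, lsub_X, lsub_C, Finset.sum_range_succ, Nat.choose, C_ofNat']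
  ring

theorem lsub_swap4 (a : ℕ → K) : lsub !![0, 1; 1, 0] (bform 4 a) =
    bform 4 (fun i => a (4 - i)) := by
  simp [bform, lsub_X, lsub_C]
  ring

end main

section final
variable {K : Type*} [Field K]

theorem eval01_lsub (M : Matrix (Fin 2) (Fin 2) K) (f : MvPolynomial (Fin 2) K) :
    eval ![0, 1] (lsub M f) = eval (fun j => M j 1) f := by
  induction f using MvPolynomial.induction_on with
  | C a => simp [lsub_C]
  | add p q hp hq => simp [hp, hq]
  | mul_X p i hp => simp [hp, lsub_X]

/-- Dehomogenization of `bform n a`. -/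
noncomputable def dehom : ℕ → (ℕ → K) → Polynomial K
  | 0, a => Polynomial.C (a 0)
  | (n + 1), a => Polynomial.X * dehom n a + dehom n (fun i => a (i + 1))

theorem dehom_natDegree (n : ℕ) (a : ℕ → K) : (dehom n a).natDegree ≤ n := by
  induction n generalizing a with
  | zero => simp [dehom]
  | succ n ih =>
    rw [dehom]
    refine Polynomial.natDegree_add_le_of_degree_le ?_ ((ih _).trans (Nat.le_succ n))
    refine Polynomial.natDegree_mul_le.trans ?_
    have := ih a
    rw [Polynomial.natDegree_X]
    omega

theorem dehom_coeff (n : ℕ) (a : ℕ → K) : (dehom n a).coeff n = a 0 := by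
  induction n generalizing a with
  | zero => simp [dehom]
  | succ n ih =>
    rw [dehom, Polynomial.coeff_add, Polynomial.coeff_X_mul, ih,
      Polynomial.coeff_eq_zero_of_natDegree_lt (Nat.lt_succ_of_le (dehom_natDegree n _)), add_zero]

theorem dehom_eval (n : ℕ) (a : ℕ → K) (t : K) :
    (dehom n a).eval t = eval ![t, 1] (bform n a) := by
  induction n generalizing a with
  | zero => simp [dehom, bform]
  | succ n ih => simp [dehom, bform, ih]

/-- Every binary form of positive degree can be moved so that it has a root at `(0 : 1)`. -/
theorem place_root [IsAlgClosed K] (n : ℕ) (hn : 0 < n) (a : ℕ → K) :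
    ∃ M : Matrix (Fin 2) (Fin 2) K, IsUnit M.det ∧ eval ![0, 1] (lsub M (bform n a)) = 0 := by
  by_cases h0 : a 0 = 0
  · refine ⟨!![0, 1; 1, 0], by simp [Matrix.det_fin_two], ?_⟩
    rw [eval01_lsub]
    have : (fun j => (!![0, 1; 1, 0] : Matrix (Fin 2) (Fin 2) K) j 1) = ![1, 0] := by
      ext j; fin_cases j <;> rfl
    rw [this, eval10_bform, h0]
  · have hd : (dehom n a).natDegree = n :=
      le_antisymm (dehom_natDegree n a)
        (Polynomial.le_natDegree_of_ne_zero (by rwa [dehom_coeff]))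
    have hd' : (dehom n a).degree ≠ 0 := by
      intro h
      have : (dehom n a).natDegree = 0 := Polynomial.natDegree_eq_of_degree_eq_some h
      omega
    obtain ⟨t, ht⟩ := IsAlgClosed.exists_root (dehom n a) hd'
    refine ⟨!![1, t; 0, 1], by simp [Matrix.det_fin_two], ?_⟩
    rw [eval01_lsub]
    have : (fun j => (!![1, t; 0, 1] : Matrix (Fin 2) (Fin 2) K) j 1) = ![t, 1] := by
      ext j; fin_cases j <;> rfl
    rw [this, ← dehom_eval]
    exact ht

theorem shift (hK : Good K) (a k : ℕ → K) (hf : Hyp (bform 8 a))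
    (hk : covK (bform 8 a) = bform 4 k) (c : K) :
    ∃ a' k' : ℕ → K, Hyp (bform 8 a') ∧ covK (bform 8 a') = bform 4 k' ∧
      (Concl (bform 8 a') → Concl (bform 8 a)) ∧
      a' 8 = a 8 ∧ a' 6 = a 6 + 2 * c * a 7 + c ^ 2 * a 8 ∧
      k' 4 = k 4 ∧ k' 3 = k 3 + c * k 4 ∧ k' 2 = k 2 + 2 * c * k 3 + c ^ 2 * k 4 ∧
      k' 1 = k 1 + 3 * c * k 2 + 3 * c ^ 2 * k 3 + c ^ 3 * k 4 ∧
      k' 0 = k 0 + 4 * c * k 1 + 6 * c ^ 2 * k 2 + 4 * c ^ 3 * k 3 + c ^ 4 * k 4 := by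
  have hdet : (!![1, 0; c, 1] : Matrix (Fin 2) (Fin 2) K).det = 1 := by
    simp [Matrix.det_fin_two]
  obtain ⟨a', e, hyp, hk', hc⟩ := transport hK a k hf hk !![1, 0; c, 1] (by rw [hdet]; exact isUnit_one)
  rw [lsub_shift8] at e
  have e' := bform_inj8 hK e
  rw [hdet, one_pow, map_one, one_mul, lsub_shift4] at hk'
  refine ⟨a', _, hyp, hk', hc, ?_, ?_, ?_, ?_, ?_, ?_, ?_⟩
  · rw [← e' 8 (by omega)]; simp
  · rw [← e' 6 (by omega)]; simp [Finset.sum_range_succ]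
  all_goals simp [Finset.sum_range_succ, Nat.choose]

theorem caseB1 (hK : Good K) (a k : ℕ → K) (hf : Hyp (bform 8 a))
    (hk : covK (bform 8 a) = bform 4 k) (k1 : k 1 = 0) (k2 : k 2 = 0)
    (k3 : k 3 = 0) (k4 : k 4 = 0) (a8 : a 8 = 0) : False := by
  have a7 := a7_ne_zero hf a8
  have two := hK.two
  obtain ⟨a', k', hyp, hk', -, e8, e6, q4, q3, q2, q1, -⟩ :=
    shift hK a k hf hk (-a 6 / (2 * a 7))
  refine caseB hK a' k' hyp hk' ?_ ?_ ?_ ?_ ?_ ?_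
  · rw [q1, k1, k2, k3, k4]; ring
  · rw [q2, k2, k3, k4]; ring
  · rw [q3, k3, k4]; ring
  · rw [q4, k4]
  · rw [e8, a8]
  · rw [e6, a8]; field_simp; ring

theorem caseB2 [IsAlgClosed K] (hK : Good K) (a k : ℕ → K) (hf : Hyp (bform 8 a))
    (hk : covK (bform 8 a) = bform 4 k) (k1 : k 1 = 0) (k2 : k 2 = 0)
    (k3 : k 3 = 0) (k4 : k 4 = 0) : False := by
  by_cases k0 : k 0 = 0
  · obtain ⟨M, hM, hr⟩ := place_root 8 (by omega) a
    obtain ⟨a', e, hyp, hk', -⟩ := transport hK a k hf hk M hM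
    rw [e, eval01_bform] at hr
    have hz : bform 4 k = 0 := by simp [bform, k0, k1, k2, k3, k4]
    rw [hz, map_zero, mul_zero] at hk'
    exact caseB1 hK a' (fun _ => 0) hyp (by rw [hk']; simp [bform]) rfl rfl rfl rfl hr
  · have e5 : shJ5 (bform 8 a) = k 0 ^ 2 * a 8 := by
      rw [shJ5, covM, hk, tv844 hK, tv444 hK]
      simp [k1, k2, k3, k4]; ring
    have h5 := hf.2.2.2.2.1
    rw [h5] at e5
    have a8 : a 8 = 0 := by simpa [k0] using e5.symm
    exact caseB1 hK a k hf hk k1 k2 k3 k4 a8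

theorem stepS3 [IsAlgClosed K] (hK : Good K) (a k : ℕ → K) (hf : Hyp (bform 8 a))
    (hk : covK (bform 8 a) = bform 4 k) (k2 : k 2 = 0)
    (k3 : k 3 = 0) (k4 : k 4 = 0) : Concl (bform 8 a) := by
  by_cases k1 : k 1 = 0
  · exact (caseB2 hK a k hf hk k1 k2 k3 k4).elim
  have two4 : (4 : K) ≠ 0 := by exact_mod_cast hK 4 (by omega) (by omega)
  obtain ⟨a', k', hyp, hk', hc, -, -, q4, q3, q2, q1, q0⟩ :=
    shift hK a k hf hk (-k 0 / (4 * k 1))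
  rw [k2, k3, k4] at q0 q1 q2
  rw [k3, k4] at q3
  rw [k4] at q4
  refine hc (caseA hK a' k' hyp hk' ?_ ?_ ?_ ?_ q4)
  · rw [q0]; field_simp; ring
  · rw [q1]; simpa using k1
  · rw [q2]; ring
  · rw [q3]; ring

theorem stepS2 [IsAlgClosed K] (hK : Good K) (a k : ℕ → K) (hf : Hyp (bform 8 a))
    (hk : covK (bform 8 a) = bform 4 k) (k4 : k 4 = 0) : Concl (bform 8 a) := by
  have two := hK.two
  have three := hK.three
  have two4 : (4 : K) ≠ 0 := by exact_mod_cast hK 4 (by omega) (by omega)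
  have six : (6 : K) ≠ 0 := by exact_mod_cast hK 6 (by omega) (by omega)
  by_cases k3 : k 3 = 0
  · have h4 := (shJ46 hK a k hk).1
    rw [hf.2.2.2.1, k3, k4] at h4
    have : 6 * k 2 ^ 2 = 0 := by linear_combination -h4
    have k2 : k 2 = 0 := by simpa [six] using this
    exact stepS3 hK a k hf hk k2 k3 k4
  obtain ⟨a', k', hyp, hk', hc, -, -, q4, q3, q2, -, -⟩ :=
    shift hK a k hf hk (-k 2 / (2 * k 3))
  rw [k4] at q2 q3 q4
  have r2 : k' 2 = 0 := by rw [q2]; field_simp; ring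
  have r3 : k' 3 ≠ 0 := by rw [q3]; simpa using k3
  apply hc
  clear hc
  obtain ⟨h4, h6⟩ := shJ46 hK a' k' hk'
  rw [hyp.2.2.2.1, q4, r2] at h4
  rw [hyp.2.2.2.2.2.1, q4, r2] at h6
  have r1 : k' 1 = 0 := by
    have : 2 * 4 * (k' 1 * k' 3) = 0 := by linear_combination h4
    simpa [two, two4, r3] using this
  have r0 : k' 0 = 0 := by
    have : 6 * (k' 0 * k' 3 ^ 2) = 0 := by linear_combination h6
    simpa [six, r3] using this
  have hdet : (!![0, 1; 1, 0] : Matrix (Fin 2) (Fin 2) K).det = -1 := by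
    simp [Matrix.det_fin_two]
  obtain ⟨b, -, hypb, hkb, hcb⟩ :=
    transport hK a' k' hyp hk' !![0, 1; 1, 0] (by rw [hdet]; exact isUnit_one.neg)
  have hone : ((-1 : K)) ^ 6 = 1 := by norm_num
  rw [hdet, hone, map_one, one_mul, lsub_swap4] at hkb
  exact hcb (caseA hK b _ hypb hkb q4 r3 r2 r1 r0)

theorem forward [IsAlgClosed K] (hK : Good K) (f : MvPolynomial (Fin 2) K)
    (hom : f.IsHomogeneous 8) (hf : Hyp f) : Concl f := by
  obtain ⟨a, rfl⟩ := exists_bform 8 hK f hom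
  obtain ⟨k, hk⟩ := exists_covK hK a
  obtain ⟨M, hM, hr⟩ := place_root 4 (by omega) k
  obtain ⟨a', -, hyp, hk', hc⟩ := transport hK a k hf hk M hM
  obtain ⟨k', hkk⟩ := exists_covK hK a'
  refine hc (stepS2 hK a' k' hyp hkk ?_)
  have := eval01_bform 4 k'
  rw [← hkk, hk', map_mul, hr, mul_zero] at this
  exact this.symm

theorem exists_zeta [IsAlgClosed K] (hK : Good K) : ∃ z : K, z ^ 7 = 1 ∧ z ≠ 1 := by
  obtain ⟨z, hz⟩ := IsAlgClosed.exists_root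
    (dehom 6 (fun i => if i = 0 then (1 : K) else
      (1 : K) / ((Nat.choose 6 i : ℕ) : K))) (by
      intro h
      have h1 := Polynomial.natDegree_eq_of_degree_eq_some (n := 0) h
      have h2 := dehom_coeff 6 (fun i => if i = 0 then (1 : K) else
        (1 : K) / ((Nat.choose 6 i : ℕ) : K))
      rw [Polynomial.coeff_eq_zero_of_natDegree_lt (by rw [h1]; omega)] at h2
      simp at h2)
  have two := hK.two
  have three := hK.three
  have five := hK.five
  have six : (6 : K) ≠ 0 := by exact_mod_cast hK 6 (by omega) (by omega)
  have f15 : (15 : K) ≠ 0 := by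
    have : (15 : K) = 3 * 5 := by norm_num
    rw [this]; exact mul_ne_zero three five
  have f20 : (20 : K) ≠ 0 := by
    have : (20 : K) = 2 * 2 * 5 := by norm_num
    rw [this]; exact mul_ne_zero (mul_ne_zero two two) five
  have hz' : z ^ 6 + z ^ 5 + z ^ 4 + z ^ 3 + z ^ 2 + z + 1 = 0 := by
    rw [Polynomial.IsRoot] at hz
    simp [dehom, Nat.choose] at hz
    field_simp at hz
    have h1800 : (6 * 15 * 20 : K) * (z ^ 6 + z ^ 5 + z ^ 4 + z ^ 3 + z ^ 2 + z + 1) = 0 := by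
      linear_combination hz
    exact (mul_eq_zero.mp h1800).resolve_left (mul_ne_zero (mul_ne_zero six f15) f20)
  refine ⟨z, by linear_combination (z - 1) * hz', ?_⟩
  rintro rfl
  apply hK.seven
  linear_combination hz'

theorem target_inv [IsAlgClosed K] (hK : Good K) :
    let t : MvPolynomial (Fin 2) K := X 0 ^ 7 * X 1 - X 1 ^ 8
    shJ2 t = 0 ∧ shJ3 t = 0 ∧ shJ4 t = 0 ∧ shJ5 t = 0 ∧ shJ6 t = 0 ∧
        shJ8 t = 0 ∧ shJ9 t = 0 ∧ shJ10 t = 0 := by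
  intro t
  obtain ⟨z, h7, h1⟩ := exists_zeta hK
  have hdet : (!![z, 0; 0, 1] : Matrix (Fin 2) (Fin 2) K).det = z := by
    simp [Matrix.det_fin_two]
  have ht : lsub !![z, 0; 0, 1] t = t := by
    simp only [t, map_sub, map_mul, map_pow, lsub_X]
    simp [mul_pow, ← map_pow, h7]
  obtain ⟨e2, e3, e4, e5, e6, -, e8, e9, e10⟩ := shJ_lsub !![z, 0; 0, 1] t
  rw [ht, hdet] at e2 e3 e4 e5 e6 e8 e9 e10
  have ord : orderOf z = 7 :=
    haveI : Fact (Nat.Prime 7) := ⟨by norm_num⟩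
    orderOf_eq_prime h7 h1
  have key : ∀ (n : ℕ) (x : K), ¬ 7 ∣ n → x = z ^ n * x → x = 0 := by
    intro n x hn hx
    by_contra h
    apply hn
    rw [← ord, orderOf_dvd_iff_pow_eq_one]
    have : (z ^ n - 1) * x = 0 := by linear_combination -hx
    have := (mul_eq_zero.mp this).resolve_right h
    linear_combination this
  exact ⟨key _ _ (by omega) e2, key _ _ (by omega) e3, key _ _ (by omega) e4,
    key _ _ (by omega) e5, key _ _ (by omega) e6, key _ _ (by omega) e8,
    key _ _ (by omega) e9, key _ _ (by omega) e10⟩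

theorem backward [IsAlgClosed K] (hK : Good K) (M : Matrix (Fin 2) (Fin 2) K)
    (f : MvPolynomial (Fin 2) K) (hf : f = lsub M (X 0 ^ 7 * X 1 - X 1 ^ 8)) :
    shJ2 f = 0 ∧ shJ3 f = 0 ∧ shJ4 f = 0 ∧ shJ5 f = 0 ∧ shJ6 f = 0 ∧
        shJ8 f = 0 ∧ shJ9 f = 0 ∧ shJ10 f = 0 := by
  obtain ⟨h2, h3, h4, h5, h6, h8, h9, h10⟩ := target_inv hK
  obtain ⟨e2, e3, e4, e5, e6, -, e8, e9, e10⟩ := shJ_lsub M (X 0 ^ 7 * X 1 - X 1 ^ 8)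
  subst hf
  exact ⟨by rw [e2, h2, mul_zero], by rw [e3, h3, mul_zero], by rw [e4, h4, mul_zero],
    by rw [e5, h5, mul_zero], by rw [e6, h6, mul_zero], by rw [e8, h8, mul_zero],
    by rw [e9, h9, mul_zero], by rw [e10, h10, mul_zero]⟩

end final

end Octic

/-- Identification of the stratum `C₁₄`: a squarefree binary octic `f` over an algebraically
closed field of characteristic `0` or `≥ 11` satisfies
`J₂ = J₃ = J₄ = J₅ = J₆ = J₈ = J₉ = J₁₀ = 0` iff `f` is `GL₂(K)`-equivalent to `X⁷Z − Z⁸`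
(the homogenization of `x⁷ − 1`), and in that case `J₇ ≠ 0`; equivalently the genus-3 curve
`y² = f(x,1)` has automorphism group `C₁₄` iff these relations hold, and such a curve is
`K`-isomorphic to `y² = x⁷ − 1`. -/
theorem statement18 {K : Type*} [Field K] [IsAlgClosed K]
    (hchar : ringChar K = 0 ∨ 11 ≤ ringChar K)
    (f : MvPolynomial (Fin 2) K) (hf : f.IsHomogeneous 8) (hsf : Squarefree f) :
    ((shJ2 f = 0 ∧ shJ3 f = 0 ∧ shJ4 f = 0 ∧ shJ5 f = 0 ∧ shJ6 f = 0 ∧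
        shJ8 f = 0 ∧ shJ9 f = 0 ∧ shJ10 f = 0) ↔
      ∃ M : Matrix (Fin 2) (Fin 2) K, IsUnit M.det ∧
        f = bind₁ (fun j : Fin 2 => C (M j 0) * X 0 + C (M j 1) * X 1)
          (X 0 ^ 7 * X 1 - X 1 ^ 8)) ∧
    ((shJ2 f = 0 ∧ shJ3 f = 0 ∧ shJ4 f = 0 ∧ shJ5 f = 0 ∧ shJ6 f = 0 ∧
        shJ8 f = 0 ∧ shJ9 f = 0 ∧ shJ10 f = 0) → shJ7 f ≠ 0) := by
  have hK := Octic.good_of_char hchar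
  refine ⟨⟨fun h => (Octic.forward hK f hf ⟨hsf, h⟩).2, ?_⟩,
    fun h => (Octic.forward hK f hf ⟨hsf, h⟩).1⟩
  rintro ⟨M, -, hM⟩
  exact Octic.backward hK M f hM
end
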